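/- arXiv:1508.07920 — 5 statements merged into one kernel-verified Lean document; each statement's English description precedes it below -/
import Mathlib

section
/- Let X^n be distributed according to the product law p_{X^n} of a DMS (X, p_X), let U_{d_n} be uniformly distributed on {1,…,2^{d_n}} and independent of X^n, and let M_n = 2^{nR}. Then for any encoder φ_n : X^n × {1,…,2^{d_n}} → {1,…,M_n} and any γ_n ∈ (0, M_n), the uniformity metric U_e(φ_n) = V(p_{φ_n(X^n, U_{d_n})}, uniform on {1,…,M_n}) satisfies U_e(φ_n) ≥ 2 ( P[ p_{X^n}(X^n) > 2^{d_n} / γ_n ] − γ_n / M_n ). -/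
open Finset Filter Real

attribute [local instance] Classical.propDecidable

noncomputable section

/-- `p` is a probability mass function on the finite type `α`. -/
def IsPMF {α : Type*} [Fintype α] (p : α → ℝ) : Prop :=
  (∀ a, 0 ≤ p a) ∧ ∑ a, p a = 1

/-- i.i.d. (product) distribution of `n` copies of a source with pmf `p`. -/
def iid {α : Type*} [Fintype α] (p : α → ℝ) (n : ℕ) : (Fin n → α) → ℝ :=
  fun x => ∏ i, p (x i)

/-- variational distance between two pmfs -/
def VD {α : Type*} [Fintype α] (p q : α → ℝ) : ℝ := ∑ a, |p a - q a|

/-- Shannon entropy, base 2 -/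
def Hsh {α : Type*} [Fintype α] (p : α → ℝ) : ℝ := - ∑ a, p a * Real.logb 2 (p a)

/-- Rényi entropy of order 2, base 2 -/
def H2 {α : Type*} [Fintype α] (p : α → ℝ) : ℝ := - Real.logb 2 (∑ a, (p a) ^ 2)

/-- min-entropy, base 2 -/
def Hinf {α : Type*} [Fintype α] (p : α → ℝ) : ℝ := - Real.logb 2 (⨆ a, p a)

/-- Kullback–Leibler divergence, base 2 -/
def KL {α : Type*} [Fintype α] (p q : α → ℝ) : ℝ := ∑ a, p a * Real.logb 2 (p a / q a)

/-- pushforward of a pmf along a map -/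
def push {α β : Type*} [Fintype α] [Fintype β] (p : α → ℝ) (f : α → β) : β → ℝ :=
  fun b => ∑ a, if f a = b then p a else 0

/-- conditional mutual information `I(X;Y|Q)` of a joint pmf on `Q × X × Y`, base 2:
`I(X;Y|Q) = H(Q,X) + H(Q,Y) - H(Q) - H(Q,X,Y)`. -/
def condMI {Q X Y : Type*} [Fintype Q] [Fintype X] [Fintype Y] (p : Q × X × Y → ℝ) : ℝ :=
  Hsh (fun qx : Q × X => ∑ y, p (qx.1, qx.2, y))
    + Hsh (fun qy : Q × Y => ∑ x, p (qy.1, x, qy.2))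
    - Hsh (fun q : Q => ∑ x, ∑ y, p (q, x, y))
    - Hsh p

/-- the set of `ε`-letter-typical sequences of length `n` -/
def typ {α : Type*} [Fintype α] (p : α → ℝ) (n : ℕ) (ε : ℝ) : Finset (Fin n → α) :=
  Finset.univ.filter fun x =>
    ∀ a, |((Finset.univ.filter fun i => x i = a).card : ℝ) / n - p a| ≤ ε * p a

/-- cumulative distribution function of the standard normal distribution -/
def stdΦ (x : ℝ) : ℝ := ∫ t in Set.Iic x, Real.exp (-(t ^ 2) / 2) / Real.sqrt (2 * Real.pi)

/-- `⌈2^r⌉₊`, the size of a message set `{1,…,2^r}` -/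
def e2 (r : ℝ) : ℕ := ⌈(2:ℝ) ^ r⌉₊


/-- Lemma 5: lower bound on the uniformity metric of any
seeded compression encoder. -/
theorem statement13 {X : Type*} [Fintype X] (pX : X → ℝ) (hX : IsPMF pX)
    (n d M : ℕ) (φ : (Fin n → X) × Fin (2 ^ d) → Fin M)
    (γ : ℝ) (hγ0 : 0 < γ) (hγM : γ < M) :
    2 * ((∑ x : Fin n → X, if (2:ℝ) ^ d / γ < iid pX n x then iid pX n x else 0) - γ / M)
      ≤ VD (fun m : Fin M =>
              ∑ x : Fin n → X, ∑ u : Fin (2 ^ d),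
                iid pX n x * (1 / (2:ℝ) ^ d) * (if φ (x, u) = m then 1 else 0))
           (fun _ => 1 / (M : ℝ)) := by
  have hM0 : (0:ℝ) < M := lt_trans hγ0 hγM
  have hD : (0:ℝ) < (2:ℝ) ^ d := by positivity
  have hp0 : ∀ x, 0 ≤ iid pX n x := fun x => Finset.prod_nonneg fun i _ => hX.1 _
  have hp1 : ∑ x, iid pX n x = 1 := by
    unfold iid
    rw [← Fintype.prod_sum (fun (_ : Fin n) (a : X) => pX a)]
    simp [hX.2]
  have hcard : ∀ c : ℝ, ∑ _u : Fin (2 ^ d), c * (1 / (2:ℝ) ^ d) = c := by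
    intro c
    rw [Finset.sum_const, Finset.card_univ, Fintype.card_fin, nsmul_eq_mul]
    push_cast
    field_simp
  unfold VD
  set q : Fin M → ℝ := fun m =>
              ∑ x : Fin n → X, ∑ u : Fin (2 ^ d),
                iid pX n x * (1 / (2:ℝ) ^ d) * (if φ (x, u) = m then 1 else 0) with hq
  have hterm0 : ∀ x u m, 0 ≤ iid pX n x * (1 / (2:ℝ) ^ d) *
      (if φ (x, u) = m then (1:ℝ) else 0) := by
    intro x u m
    refine mul_nonneg (mul_nonneg (hp0 x) (by positivity)) ?_
    split_ifs <;> norm_num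
  have hq0 : ∀ m, 0 ≤ q m := fun m =>
    Finset.sum_nonneg fun x _ => Finset.sum_nonneg fun u _ => hterm0 x u m
  -- expectation of a function of the output
  have hE : ∀ g : Fin M → ℝ, ∑ m, q m * g m =
      ∑ x : Fin n → X, ∑ u : Fin (2 ^ d), iid pX n x * (1 / (2:ℝ) ^ d) * g (φ (x, u)) := by
    intro g
    simp only [hq, Finset.sum_mul]
    rw [Finset.sum_comm]
    refine Finset.sum_congr rfl fun x _ => ?_
    rw [Finset.sum_comm]
    refine Finset.sum_congr rfl fun u _ => ?_
    rw [Finset.sum_eq_single (φ (x, u))]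
    · simp
    · intro b _ hb
      simp [Ne.symm hb]
    · simp
  have hq1 : ∑ m, q m = 1 := by
    have h := hE (fun _ => 1)
    simp only [mul_one] at h
    refine h.trans (Eq.trans ?_ hp1)
    exact Finset.sum_congr rfl fun x _ => hcard _
  have hle : ∀ x u, iid pX n x * (1 / (2:ℝ) ^ d) ≤ q (φ (x, u)) := by
    intro x u
    have h1 := Finset.single_le_sum (f := fun u' => iid pX n x * (1 / (2:ℝ) ^ d) *
      (if φ (x, u') = φ (x, u) then (1:ℝ) else 0))
      (fun u' _ => hterm0 x u' _) (Finset.mem_univ u)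
    have h2 := Finset.single_le_sum (f := fun x' => ∑ u' : Fin (2 ^ d),
      iid pX n x' * (1 / (2:ℝ) ^ d) * (if φ (x', u') = φ (x, u) then (1:ℝ) else 0))
      (fun x' _ => Finset.sum_nonneg fun u' _ => hterm0 x' u' _) (Finset.mem_univ x)
    simp only [if_true, mul_one] at h1
    exact h1.trans h2
  let g : Fin M → ℝ := fun m => if 1 / γ < q m then 1 else 0
  have hg : ∀ m, g m = if 1 / γ < q m then 1 else 0 := fun m => rfl
  have hP : (∑ x : Fin n → X, if (2:ℝ) ^ d / γ < iid pX n x then iid pX n x else 0)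
      ≤ ∑ m, q m * g m := by
    rw [hE]
    refine Finset.sum_le_sum fun x _ => ?_
    split_ifs with h
    · conv_lhs => rw [← hcard (iid pX n x)]
      refine Finset.sum_le_sum fun u _ => ?_
      have : 1 / γ < q (φ (x, u)) := by
        refine lt_of_lt_of_le ?_ (hle x u)
        rw [mul_one_div, lt_div_iff₀ hD]
        calc 1 / γ * 2 ^ d = 2 ^ d / γ := by ring
          _ < _ := h
      rw [hg, if_pos this, mul_one]
    · refine Finset.sum_nonneg fun u _ => mul_nonneg (mul_nonneg (hp0 x) (by positivity)) ?_
      rw [hg]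
      split_ifs <;> norm_num
  have hS : ∑ m, g m ≤ γ := by
    calc ∑ m, g m ≤ ∑ m, γ * q m := by
          refine Finset.sum_le_sum fun m _ => ?_
          rw [hg]
          split_ifs with h
          · rw [div_lt_iff₀ hγ0] at h
            linarith
          · exact mul_nonneg hγ0.le (hq0 m)
      _ = γ := by rw [← Finset.mul_sum, hq1, mul_one]
  have hu : ∑ _m : Fin M, 1 / (M:ℝ) = 1 := by
    rw [Finset.sum_const, Finset.card_univ, Fintype.card_fin, nsmul_eq_mul]
    field_simp
  have hV : ∑ m, (2 * (q m * g m - g m * (1 / (M:ℝ))) - (q m - 1 / (M:ℝ)))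
      ≤ ∑ m, |q m - 1 / (M:ℝ)| := by
    refine Finset.sum_le_sum fun m _ => ?_
    rw [hg]
    split_ifs
    · linarith [le_abs_self (q m - 1 / (M:ℝ))]
    · linarith [neg_abs_le (q m - 1 / (M:ℝ))]
  rw [Finset.sum_sub_distrib, ← Finset.mul_sum, Finset.sum_sub_distrib, Finset.sum_sub_distrib,
    hq1, hu, ← Finset.sum_mul] at hV
  have hS' : (∑ m, g m) * (1 / (M:ℝ)) ≤ γ / M := by
    rw [mul_one_div]
    exact div_le_div_of_nonneg_right hS hM0.le
  linarith
end
end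

section
/- Let p_{QXZ} = p_Q p_{X|Q} p_{Z|X} be a joint probability mass function on finite sets Q × X × Z, where p_{Z|X} is a discrete memoryless channel. Fix rates R₀, R_c, R_p > 0 and construct a random codebook C_n as follows: generate sequences Q^n(i), i ∈ {1,…,2^{nR₀}}, i.i.d. according to the product of p_Q; for each i, generate sequences X^n(i,j,s), j ∈ {1,…,2^{nR_c}}, s ∈ {1,…,2^{nR_p}}, conditionally independent with each coordinate t distributed according to p_{X|Q = Q_t(i)}. Let M₀, M_c, M_p be mutually independent messages independent of the codebook, with M_p ∈ {1,…,2^{nR_p}} having a given (not necessarily uniform) distribution, transmit X^n(M₀, M_c, M_p) through the memoryless channel p_{Z|X} to produce Z^n. If lim_{n→∞} (1/n) H₂(M_p) > I(X;Z|Q), then there exists β > 0 such that for all sufficiently large n, E_{C_n}[ V(p_{M_c Z^n}, p_{M_c} p_{Z^n}) ] ≤ 2^{−βn}. -/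
open Finset Filter Real

attribute [local instance] Classical.propDecidable

noncomputable section

lemma sum_pi_prod {ι α : Type*} [Fintype ι] [DecidableEq ι] [Fintype α] (F : ι → α → ℝ) :
    ∑ f : ι → α, ∏ i, F i (f i) = ∏ i, ∑ a, F i a := by
  classical
  rw [Finset.prod_univ_sum]
  simp [Fintype.piFinset_univ]

lemma marg {ι α : Type*} [Fintype ι] [DecidableEq ι] [Fintype α] (p : ι → α → ℝ)
    (hp : ∀ i, ∑ a, p i a = 1) (i0 : ι) (g : α → ℝ) :
    ∑ f : ι → α, (∏ i, p i (f i)) * g (f i0) = ∑ a, p i0 a * g a := by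
  have h := sum_pi_prod (fun i a => p i a * if i = i0 then g a else 1)
  have h1 : ∀ f : ι → α, ∏ i, (p i (f i) * if i = i0 then g (f i) else 1)
      = (∏ i, p i (f i)) * g (f i0) := by
    intro f
    rw [Finset.prod_mul_distrib]
    simp
  simp only [h1] at h
  rw [h, Finset.prod_eq_single i0]
  · simp
  · intro i _ hi
    simp [hi, hp]
  · simp

lemma marg_one {ι α : Type*} [Fintype ι] [DecidableEq ι] [Fintype α] (p : ι → α → ℝ)
    (hp : ∀ i, ∑ a, p i a = 1) :
    ∑ f : ι → α, (∏ i, p i (f i)) = 1 := by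
  rw [sum_pi_prod]; simp [hp]

lemma marg_two {ι α : Type*} [Fintype ι] [DecidableEq ι] [Fintype α] (p : ι → α → ℝ)
    (hp : ∀ i, ∑ a, p i a = 1) (i0 i1 : ι) (hne : i0 ≠ i1) (g k : α → ℝ) :
    ∑ f : ι → α, (∏ i, p i (f i)) * (g (f i0) * k (f i1))
      = (∑ a, p i0 a * g a) * ∑ a, p i1 a * k a := by
  have h := sum_pi_prod (fun i a => p i a * ((if i = i0 then g a else 1) *
    (if i = i1 then k a else 1)))
  have h1 : ∀ f : ι → α, ∏ i, (p i (f i) * ((if i = i0 then g (f i) else 1) *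
      (if i = i1 then k (f i) else 1)))
      = (∏ i, p i (f i)) * (g (f i0) * k (f i1)) := by
    intro f
    rw [Finset.prod_mul_distrib, Finset.prod_mul_distrib]
    simp
  simp only [h1] at h
  rw [h, Finset.prod_eq_mul i0 i1 hne]
  · simp [hne, hne.symm]
  · intro i _ hi
    simp [hi.1, hi.2, hp]
  · simp
  · simp

/-- second moment of a weighted sum of centred iid variables -/
lemma second_moment {S α : Type*} [Fintype S] [DecidableEq S] [Fintype α] (P : α → ℝ)
    (hP : IsPMF P) (w : S → ℝ) (a : α → ℝ) :
    ∑ f : S → α, (∏ s, P (f s)) * (∑ s, w s * (a (f s) - ∑ x, P x * a x)) ^ 2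
      ≤ (∑ s, w s ^ 2) * ∑ x, P x * a x ^ 2 := by
  set m := ∑ x, P x * a x with hm
  have hc : ∑ x, P x * (a x - m) = 0 := by
    simp only [mul_sub, Finset.sum_sub_distrib, ← Finset.sum_mul, hP.2]
    rw [← hm]; ring
  have hv : ∑ x, P x * (a x - m) ^ 2 ≤ ∑ x, P x * a x ^ 2 := by
    have : ∑ x, P x * (a x - m) ^ 2 = ∑ x, P x * a x ^ 2 - m ^ 2 := by
      have e : ∀ x, P x * (a x - m) ^ 2 = P x * a x ^ 2 - 2 * m * (P x * a x) + m ^ 2 * P x := by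
        intro x; ring
      simp only [e, Finset.sum_sub_distrib, Finset.sum_add_distrib, ← Finset.mul_sum, hP.2]
      rw [← hm]; ring
    rw [this]; nlinarith [sq_nonneg m]
  have key : ∑ f : S → α, (∏ s, P (f s)) * (∑ s, w s * (a (f s) - m)) ^ 2
      = ∑ s, ∑ s', w s * w s' * ∑ f : S → α, (∏ s, P (f s)) * ((a (f s) - m) * (a (f s') - m)) := by
    have e : ∀ f : S → α, (∏ s, P (f s)) * (∑ s, w s * (a (f s) - m)) ^ 2
        = ∑ s, ∑ s', w s * w s' * ((∏ s, P (f s)) * ((a (f s) - m) * (a (f s') - m))) := by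
      intro f
      rw [sq, Finset.sum_mul_sum]
      simp only [Finset.mul_sum]
      refine Finset.sum_congr rfl fun s _ => Finset.sum_congr rfl fun s' _ => ?_
      ring
    simp only [e]
    rw [Finset.sum_comm]
    refine Finset.sum_congr rfl fun s _ => ?_
    rw [Finset.sum_comm]
    refine Finset.sum_congr rfl fun s' _ => ?_
    rw [Finset.mul_sum]
  rw [key]
  have e2' : ∀ s s', w s * w s' * ∑ f : S → α, (∏ s, P (f s)) * ((a (f s) - m) * (a (f s') - m))
      = if s = s' then w s ^ 2 * ∑ x, P x * (a x - m) ^ 2 else 0 := by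
    intro s s'
    split_ifs with h
    · subst h
      have := marg (fun _ : S => P) (fun _ => hP.2) s (fun x => (a x - m) * (a x - m))
      rw [this]
      simp only [sq]
    · have := marg_two (fun _ : S => P) (fun _ => hP.2) s s' h (fun x => (a x - m)) (fun x => (a x - m))
      rw [this, hc]; ring
  simp only [e2']
  simp only [Finset.sum_ite_eq, Finset.mem_univ, if_true]
  rw [← Finset.sum_mul]
  exact mul_le_mul_of_nonneg_left hv (Finset.sum_nonneg fun _ _ => sq_nonneg _)

lemma sum_abs_le_sqrt {α : Type*} [Fintype α] (p : α → ℝ) (hp : IsPMF p) (g : α → ℝ) :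
    ∑ x, p x * |g x| ≤ √(∑ x, p x * g x ^ 2) := by
  apply Real.le_sqrt_of_sq_le
  have := Finset.sum_mul_sq_le_sq_mul_sq Finset.univ (fun x => √(p x)) (fun x => √(p x) * |g x|)
  have e1 : ∀ x, √(p x) * (√(p x) * |g x|) = p x * |g x| := fun x => by
    rw [← mul_assoc, Real.mul_self_sqrt (hp.1 x)]
  have e3 : ∀ x, (√(p x) * |g x|) ^ 2 = p x * g x ^ 2 := fun x => by
    rw [mul_pow, Real.sq_sqrt (hp.1 x), sq_abs]
  have e4 : ∀ x, √(p x) ^ 2 = p x := fun x => Real.sq_sqrt (hp.1 x)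
  simp only [e1, e3, e4, hp.2, one_mul] at this
  exact this

lemma isPMF_pi {ι α : Type*} [Fintype ι] [DecidableEq ι] [Fintype α] (p : ι → α → ℝ)
    (hp : ∀ i, IsPMF (p i)) : IsPMF (fun f : ι → α => ∏ i, p i (f i)) :=
  ⟨fun _ => Finset.prod_nonneg fun i _ => (hp i).1 _, marg_one p fun i => (hp i).2⟩

/-- one-shot soft covering -/
lemma soft_cover {S α ζ : Type*} [Fintype S] [DecidableEq S] [Fintype α] [Fintype ζ] (P : α → ℝ)
    (hP : IsPMF P) (w : S → ℝ) (hw : IsPMF w) (V : α → ζ → ℝ) (hV : ∀ x, IsPMF (V x)) (T : ℝ)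
    (hT : 0 ≤ T) (Pz : ζ → ℝ) (hPz : ∀ z, Pz z = ∑ x, P x * V x z) :
    ∑ f : S → α, (∏ s, P (f s)) * ∑ z, |∑ s, w s * V (f s) z - Pz z|
      ≤ √(T * ∑ s, w s ^ 2)
        + 2 * ∑ x, ∑ z, P x * V x z * (if V x z ≤ T * Pz z then 0 else 1) := by
  have hPz0 : ∀ z, 0 ≤ Pz z := fun z => by
    rw [hPz]; exact Finset.sum_nonneg fun x _ => mul_nonneg (hP.1 x) ((hV x).1 z)
  have hPz1 : ∑ z, Pz z = 1 := by
    simp only [hPz]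
    rw [Finset.sum_comm]
    simp only [← Finset.mul_sum, (hV _).2, mul_one, hP.2]
  have hpi := isPMF_pi (fun _ : S => P) (fun _ => hP)
  have hz : ∀ z, ∑ f : S → α, (∏ s, P (f s)) * |∑ s, w s * V (f s) z - Pz z|
      ≤ Pz z * √(T * ∑ s, w s ^ 2)
        + 2 * ∑ x, P x * V x z * (if V x z ≤ T * Pz z then 0 else 1) := by
    intro z
    set a : α → ℝ := fun x => V x z * (if V x z ≤ T * Pz z then 1 else 0) with ha
    set b : α → ℝ := fun x => V x z * (if V x z ≤ T * Pz z then 0 else 1) with hb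
    have hab : ∀ x, V x z = a x + b x := by
      intro x; simp only [ha, hb]; split_ifs <;> ring
    have hb0 : ∀ x, 0 ≤ b x := by
      intro x; simp only [hb]; split_ifs
      · simp
      · simpa using (hV x).1 z
    set m := ∑ x, P x * a x with hm
    have hPb : Pz z = m + ∑ x, P x * b x := by
      rw [hPz, hm, ← Finset.sum_add_distrib]
      exact Finset.sum_congr rfl fun x _ => by rw [hab]; ring
    have hB0 : 0 ≤ ∑ x, P x * b x := Finset.sum_nonneg fun x _ => mul_nonneg (hP.1 x) (hb0 x)
    have pt : ∀ f : S → α, |∑ s, w s * V (f s) z - Pz z|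
        ≤ |∑ s, w s * (a (f s) - m)| + (∑ s, w s * b (f s) + ∑ x, P x * b x) := by
      intro f
      have e : ∑ s, w s * V (f s) z - Pz z
          = ∑ s, w s * (a (f s) - m) + (∑ s, w s * b (f s) - ∑ x, P x * b x) := by
        simp only [hab, mul_add, mul_sub, Finset.sum_add_distrib, Finset.sum_sub_distrib,
          ← Finset.sum_mul, hw.2]
        rw [hPb]; ring
      rw [e]
      refine (abs_add_le _ _).trans (add_le_add le_rfl ?_)
      have hs : 0 ≤ ∑ s, w s * b (f s) :=
        Finset.sum_nonneg fun s _ => mul_nonneg (hw.1 s) (hb0 _)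
      rw [abs_le]; constructor <;> linarith
    have step1 : ∑ f : S → α, (∏ s, P (f s)) * |∑ s, w s * V (f s) z - Pz z|
        ≤ ∑ f : S → α, (∏ s, P (f s)) * |∑ s, w s * (a (f s) - m)|
          + (∑ f : S → α, (∏ s, P (f s)) * ∑ s, w s * b (f s) + ∑ x, P x * b x) := by
      calc _ ≤ ∑ f : S → α, (∏ s, P (f s)) * (|∑ s, w s * (a (f s) - m)|
              + (∑ s, w s * b (f s) + ∑ x, P x * b x)) :=
            Finset.sum_le_sum fun f _ => mul_le_mul_of_nonneg_left (pt f) (hpi.1 f)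
        _ = _ := by
            simp only [mul_add, Finset.sum_add_distrib]
            rw [← Finset.sum_mul (s := Finset.univ) (f := fun f : S → α => ∏ s, P (f s)), hpi.2,
              one_mul]
    have step2 : ∑ f : S → α, (∏ s, P (f s)) * ∑ s, w s * b (f s) = ∑ x, P x * b x := by
      simp only [Finset.mul_sum]
      rw [Finset.sum_comm]
      have : ∀ s, ∑ f : S → α, (∏ s, P (f s)) * (w s * b (f s)) = w s * ∑ x, P x * b x := by
        intro s
        have := marg (fun _ : S => P) (fun _ => hP.2) s (fun x => w s * b x)
        rw [this, Finset.mul_sum]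
        exact Finset.sum_congr rfl fun x _ => by ring
      simp only [this]
      rw [← Finset.sum_mul, hw.2, one_mul]
    have step3 : ∑ f : S → α, (∏ s, P (f s)) * |∑ s, w s * (a (f s) - m)|
        ≤ Pz z * √(T * ∑ s, w s ^ 2) := by
      refine (sum_abs_le_sqrt _ hpi _).trans ?_
      refine (Real.sqrt_le_sqrt (second_moment P hP w a)).trans ?_
      have hsq : Pz z * √(T * ∑ s, w s ^ 2) = √(Pz z ^ 2 * (T * ∑ s, w s ^ 2)) := by
        rw [Real.sqrt_mul (sq_nonneg _), Real.sqrt_sq (hPz0 z)]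
      rw [hsq]
      apply Real.sqrt_le_sqrt
      have : ∑ x, P x * a x ^ 2 ≤ T * Pz z * Pz z := by
        calc _ ≤ ∑ x, T * Pz z * (P x * V x z) := by
              refine Finset.sum_le_sum fun x _ => ?_
              have h1 : a x ^ 2 ≤ T * Pz z * V x z := by
                simp only [ha]
                have hv := (hV x).1 z
                split_ifs with h
                · nlinarith
                · simpa using mul_nonneg (mul_nonneg hT (hPz0 z)) hv
              nlinarith [mul_le_mul_of_nonneg_left h1 (hP.1 x)]
          _ = _ := by rw [← Finset.mul_sum, ← hPz]
      have hW0 : 0 ≤ ∑ s, w s ^ 2 := Finset.sum_nonneg fun _ _ => sq_nonneg _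
      nlinarith [mul_le_mul_of_nonneg_left this hW0]
    have e5 : ∑ x, P x * V x z * (if V x z ≤ T * Pz z then (0:ℝ) else 1) = ∑ x, P x * b x :=
      Finset.sum_congr rfl fun x _ => by simp only [hb]; ring
    rw [e5]
    linarith
  calc _ = ∑ z, ∑ f : S → α, (∏ s, P (f s)) * |∑ s, w s * V (f s) z - Pz z| := by
        simp only [Finset.mul_sum]; rw [Finset.sum_comm]
    _ ≤ ∑ z, (Pz z * √(T * ∑ s, w s ^ 2)
        + 2 * ∑ x, P x * V x z * (if V x z ≤ T * Pz z then 0 else 1)) :=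
        Finset.sum_le_sum fun z _ => hz z
    _ = _ := by
        rw [Finset.sum_add_distrib, ← Finset.sum_mul, hPz1, one_mul, ← Finset.mul_sum]
        congr 2
        rw [Finset.sum_comm]

/-- the triangle inequality step -/
lemma secrecy_triangle {J ζ : Type*} [Fintype J] [Fintype ζ] (pc : J → ℝ) (hpc : IsPMF pc)
    (A : J → ζ → ℝ) (q : ζ → ℝ) :
    ∑ j, ∑ z, |pc j * A j z - pc j * ∑ j', pc j' * A j' z|
      ≤ 2 * ∑ j, pc j * ∑ z, |A j z - q z| := by
  have h1 : ∀ j z, |pc j * A j z - pc j * ∑ j', pc j' * A j' z|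
      ≤ pc j * |A j z - q z| + pc j * ∑ j', pc j' * |A j' z - q z| := by
    intro j z
    rw [← mul_sub, abs_mul, abs_of_nonneg (hpc.1 j), ← mul_add]
    refine mul_le_mul_of_nonneg_left ?_ (hpc.1 j)
    have e : A j z - ∑ j', pc j' * A j' z = (A j z - q z) - ∑ j', pc j' * (A j' z - q z) := by
      simp only [mul_sub, Finset.sum_sub_distrib, ← Finset.sum_mul, hpc.2]; ring
    rw [e]
    refine (abs_sub _ _).trans (add_le_add le_rfl ?_)
    refine (Finset.abs_sum_le_sum_abs _ _).trans (le_of_eq ?_)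
    exact Finset.sum_congr rfl fun j' _ => by rw [abs_mul, abs_of_nonneg (hpc.1 j')]
  calc _ ≤ ∑ j, ∑ z, (pc j * |A j z - q z| + pc j * ∑ j', pc j' * |A j' z - q z|) :=
        Finset.sum_le_sum fun j _ => Finset.sum_le_sum fun z _ => h1 j z
    _ = _ := by
        simp only [Finset.sum_add_distrib]
        have : ∑ j, ∑ z, pc j * ∑ j', pc j' * |A j' z - q z|
            = ∑ j, pc j * ∑ z, |A j z - q z| := by
          simp only [← Finset.mul_sum]
          rw [← Finset.sum_mul, hpc.2, one_mul, Finset.sum_comm]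
          simp only [← Finset.mul_sum]
        rw [this]
        simp only [← Finset.mul_sum]
        ring

/-- reduction of the codebook average to a single soft-covering average -/
lemma codebook_bound {I J S κ α ζ : Type*} [Fintype I] [Fintype J] [Fintype S] [Fintype κ]
    [Fintype α] [Fintype ζ] [DecidableEq I] [DecidableEq J] [DecidableEq S]
    (p0 : I → ℝ) (pc : J → ℝ) (w : S → ℝ) (h0 : IsPMF p0) (hc : IsPMF pc)
    (pq : κ → ℝ) (hq : IsPMF pq) (P : κ → α → ℝ) (hP : ∀ k, IsPMF (P k)) (V : α → ζ → ℝ)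
    (Pz : κ → ζ → ℝ) :
    ∑ c : (I → κ) × (I → J → S → α),
        ((∏ i, pq (c.1 i)) * ∏ i, ∏ j, ∏ s, P (c.1 i) (c.2 i j s)) *
        (∑ j, ∑ z, |pc j * (∑ i, p0 i * ∑ s, w s * V (c.2 i j s) z)
            - pc j * (∑ j', pc j' * (∑ i, p0 i * ∑ s, w s * V (c.2 i j' s) z))|)
      ≤ 2 * ∑ k, pq k * ∑ f : S → α, (∏ s, P k (f s)) *
          ∑ z, |∑ s, w s * V (f s) z - Pz k z| := by
  set φ : κ → (S → α) → ℝ := fun k f => ∑ z, |∑ s, w s * V (f s) z - Pz k z| with hφ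
  have hwt : ∀ c : (I → κ) × (I → J → S → α),
      0 ≤ (∏ i, pq (c.1 i)) * ∏ i, ∏ j, ∏ s, P (c.1 i) (c.2 i j s) := fun c =>
    mul_nonneg (Finset.prod_nonneg fun i _ => hq.1 _)
      (Finset.prod_nonneg fun i _ => Finset.prod_nonneg fun j _ => Finset.prod_nonneg fun s _ =>
        (hP _).1 _)
  have hD : ∀ c : (I → κ) × (I → J → S → α),
      (∑ j, ∑ z, |pc j * (∑ i, p0 i * ∑ s, w s * V (c.2 i j s) z)
            - pc j * (∑ j', pc j' * (∑ i, p0 i * ∑ s, w s * V (c.2 i j' s) z))|)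
      ≤ 2 * ∑ j, pc j * ∑ i, p0 i * φ (c.1 i) (c.2 i j) := by
    intro c
    refine (secrecy_triangle pc hc (fun j z => ∑ i, p0 i * ∑ s, w s * V (c.2 i j s) z)
      (fun z => ∑ i, p0 i * Pz (c.1 i) z)).trans ?_
    refine mul_le_mul_of_nonneg_left ?_ (by norm_num)
    refine Finset.sum_le_sum fun j _ => mul_le_mul_of_nonneg_left ?_ (hc.1 j)
    simp only [hφ, Finset.mul_sum (s := (Finset.univ : Finset ζ))]
    rw [Finset.sum_comm (s := (Finset.univ : Finset I))]
    refine Finset.sum_le_sum fun z _ => ?_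
    rw [← Finset.sum_sub_distrib]
    refine (Finset.abs_sum_le_sum_abs _ _).trans (le_of_eq ?_)
    exact Finset.sum_congr rfl fun i _ => by rw [← mul_sub, abs_mul, abs_of_nonneg (h0.1 i)]
  refine (Finset.sum_le_sum fun c _ => mul_le_mul_of_nonneg_left (hD c) (hwt c)).trans ?_
  apply le_of_eq
  have hS : ∀ k, ∑ f : S → α, ∏ s, P k (f s) = 1 := fun k =>
    marg_one (fun _ : S => P k) fun _ => (hP k).2
  have hJS : ∀ k, ∑ f : J → S → α, ∏ j, ∏ s, P k (f j s) = 1 := fun k =>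
    marg_one (fun (_ : J) (g : S → α) => ∏ s, P k (g s)) fun _ => hS k
  have hm : ∀ i j, ∑ c : (I → κ) × (I → J → S → α),
      ((∏ i, pq (c.1 i)) * ∏ i, ∏ j, ∏ s, P (c.1 i) (c.2 i j s)) * φ (c.1 i) (c.2 i j)
      = ∑ k, pq k * ∑ f : S → α, (∏ s, P k (f s)) * φ k f := by
    intro i0 j0
    rw [Fintype.sum_prod_type]
    have inner : ∀ q : I → κ, ∑ x : I → J → S → α,
        ((∏ i, pq (q i)) * ∏ i, ∏ j, ∏ s, P (q i) (x i j s)) * φ (q i0) (x i0 j0)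
        = (∏ i, pq (q i)) * ∑ f : S → α, (∏ s, P (q i0) (f s)) * φ (q i0) f := by
      intro q
      simp only [mul_assoc]
      rw [← Finset.mul_sum]
      congr 1
      have h1 := marg (fun (i : I) (y : J → S → α) => ∏ j, ∏ s, P (q i) (y j s))
        (fun i => hJS (q i)) i0 (fun y => φ (q i0) (y j0))
      have h2 := marg (fun (_ : J) (g : S → α) => ∏ s, P (q i0) (g s))
        (fun _ => hS (q i0)) j0 (fun g => φ (q i0) g)
      exact h1.trans h2
    simp only [inner]
    exact marg (fun _ : I => pq) (fun _ => hq.2) i0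
      (fun k => ∑ f : S → α, (∏ s, P k (f s)) * φ k f)
  set E := ∑ k, pq k * ∑ f : S → α, (∏ s, P k (f s)) * φ k f with hE
  calc _ = 2 * ∑ j, pc j * ∑ i, p0 i * ∑ c : (I → κ) × (I → J → S → α),
      ((∏ i, pq (c.1 i)) * ∏ i, ∏ j, ∏ s, P (c.1 i) (c.2 i j s)) * φ (c.1 i) (c.2 i j) := by
        simp only [Finset.mul_sum]
        rw [Finset.sum_comm]
        refine Finset.sum_congr rfl fun j _ => ?_
        rw [Finset.sum_comm]
        refine Finset.sum_congr rfl fun i _ => ?_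
        refine Finset.sum_congr rfl fun c _ => ?_
        ring
    _ = 2 * E := by
        simp only [hm]
        simp only [← Finset.sum_mul, h0.2, hc.2, one_mul]

lemma condMI_eq {Q X Z : Type*} [Fintype Q] [Fintype X] [Fintype Z]
    (pQ : Q → ℝ) (pXgQ : Q → X → ℝ) (W : X → Z → ℝ)
    (hQ : IsPMF pQ) (hXgQ : ∀ q, IsPMF (pXgQ q)) (hW : ∀ x, IsPMF (W x)) :
    condMI (fun t : Q × X × Z => pQ t.1 * pXgQ t.1 t.2.1 * W t.2.1 t.2.2)
      = ∑ q, ∑ x, ∑ z, pQ q * pXgQ q x * W x z *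
          Real.logb 2 (W x z / ∑ x', pXgQ q x' * W x' z) := by
  have h1 : ∀ q x, ∑ z, pQ q * pXgQ q x * W x z = pQ q * pXgQ q x := fun q x => by
    rw [← Finset.mul_sum, (hW x).2, mul_one]
  have h2 : ∀ q z, ∑ x, pQ q * pXgQ q x * W x z = pQ q * ∑ x, pXgQ q x * W x z := fun q z => by
    rw [Finset.mul_sum]; exact Finset.sum_congr rfl fun x _ => by ring
  have h3 : ∀ q, ∑ x, ∑ z, pQ q * pXgQ q x * W x z = pQ q := fun q => by
    simp only [h1]; rw [← Finset.mul_sum, (hXgQ q).2, mul_one]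
  unfold condMI Hsh
  have h4 : ∀ q, ∑ x, pQ q * pXgQ q x = pQ q := fun q => by
    rw [← Finset.mul_sum, (hXgQ q).2, mul_one]
  simp only [Fintype.sum_prod_type, h1, h2, h4]
  have a1 : ∑ q, ∑ x, pQ q * pXgQ q x * Real.logb 2 (pQ q * pXgQ q x)
      = ∑ q, ∑ x, ∑ z, pQ q * pXgQ q x * W x z * Real.logb 2 (pQ q * pXgQ q x) := by
    refine Finset.sum_congr rfl fun q _ => Finset.sum_congr rfl fun x _ => ?_
    rw [← Finset.sum_mul, h1]
  have a2 : ∑ q, ∑ z, pQ q * (∑ x, pXgQ q x * W x z) *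
        Real.logb 2 (pQ q * ∑ x, pXgQ q x * W x z)
      = ∑ q, ∑ x, ∑ z, pQ q * pXgQ q x * W x z *
        Real.logb 2 (pQ q * ∑ x, pXgQ q x * W x z) := by
    refine Finset.sum_congr rfl fun q _ => ?_
    rw [Finset.sum_comm (s := (Finset.univ : Finset X))]
    refine Finset.sum_congr rfl fun z _ => ?_
    rw [← Finset.sum_mul, h2]
  have a3 : ∑ q, pQ q * Real.logb 2 (pQ q)
      = ∑ q, ∑ x, ∑ z, pQ q * pXgQ q x * W x z * Real.logb 2 (pQ q) := by
    refine Finset.sum_congr rfl fun q _ => ?_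
    simp only [← Finset.sum_mul]
    rw [h3]
  rw [a1, a2, a3]
  have key : ∀ q x z, pQ q * pXgQ q x * W x z *
        Real.logb 2 (W x z / ∑ x', pXgQ q x' * W x' z)
      = - (pQ q * pXgQ q x * W x z * Real.logb 2 (pQ q * pXgQ q x))
        - (pQ q * pXgQ q x * W x z * Real.logb 2 (pQ q * ∑ x, pXgQ q x * W x z))
        + pQ q * pXgQ q x * W x z * Real.logb 2 (pQ q)
        + pQ q * pXgQ q x * W x z * Real.logb 2 (pQ q * pXgQ q x * W x z) := by
    intro q x z
    by_cases h : pQ q * pXgQ q x * W x z = 0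
    · simp only [h]; ring
    · have hw : W x z ≠ 0 := right_ne_zero_of_mul h
      have hqx : pQ q * pXgQ q x ≠ 0 := left_ne_zero_of_mul h
      have hq : pQ q ≠ 0 := left_ne_zero_of_mul hqx
      have hx : pXgQ q x ≠ 0 := right_ne_zero_of_mul hqx
      have hz : ∑ x', pXgQ q x' * W x' z ≠ 0 := by
        have hnn : ∀ x', 0 ≤ pXgQ q x' * W x' z := fun x' =>
          mul_nonneg ((hXgQ q).1 x') ((hW x').1 z)
        intro h0
        have := (Finset.sum_eq_zero_iff_of_nonneg fun x' _ => hnn x').1 h0 x (Finset.mem_univ x)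
        exact mul_ne_zero hx hw this
      rw [Real.logb_div hw hz, Real.logb_mul hqx hw, Real.logb_mul hq hz]
      ring
  simp only [key, Finset.sum_add_distrib, Finset.sum_sub_distrib, Finset.sum_neg_distrib]
  ring

lemma exists_chernoff {Λ : Type*} [Fintype Λ] (p ρ : Λ → ℝ) (hp : IsPMF p)
    (hρ : ∀ a, p a ≠ 0 → 0 < ρ a) (hneg : ∑ a, p a * Real.log (ρ a) < 0) :
    ∃ θ : ℝ, 0 < θ ∧ ∑ a, p a * ρ a ^ θ < 1 := by
  have hd : HasDerivAt (fun θ : ℝ => ∑ a, p a * ρ a ^ θ) (∑ a, p a * Real.log (ρ a)) 0 := by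
    refine HasDerivAt.fun_sum fun a _ => ?_
    by_cases h : p a = 0
    · simpa [h] using hasDerivAt_const (0:ℝ) (0:ℝ)
    · have h1 := ((Real.hasStrictDerivAt_const_rpow (hρ a h) 0).hasDerivAt).const_mul (p a)
      simpa using h1
  have hs := (hasDerivAt_iff_tendsto_slope.1 hd).mono_left
    (nhdsWithin_mono (0:ℝ) (fun x (hx : x ∈ Set.Ioi (0:ℝ)) => ne_of_gt hx))
  have he := (hs.eventually (gt_mem_nhds hneg)).and self_mem_nhdsWithin
  obtain ⟨θ, h1, h2⟩ := he.exists
  refine ⟨θ, h2, ?_⟩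
  have h2' : 0 < θ := h2
  rw [slope_def_field] at h1
  have h3 : ∑ a, p a * ρ a ^ (0:ℝ) = 1 := by simp [hp.2]
  rw [h3, sub_zero, div_lt_iff₀ h2'] at h1
  linarith

lemma sum_triple_prod {Q X Z : Type*} [Fintype Q] [Fintype X] [Fintype Z] (n : ℕ)
    (F : Q → X → Z → ℝ) :
    ∑ q : Fin n → Q, ∑ x : Fin n → X, ∑ z : Fin n → Z, ∏ t, F (q t) (x t) (z t)
      = (∑ q, ∑ x, ∑ z, F q x z) ^ n := by
  have h1 : ∀ (q : Fin n → Q) (x : Fin n → X), ∑ z : Fin n → Z, ∏ t, F (q t) (x t) (z t)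
      = ∏ t, ∑ z, F (q t) (x t) z := fun q x => sum_pi_prod (fun t z => F (q t) (x t) z)
  simp only [h1]
  have h2 : ∀ (q : Fin n → Q), ∑ x : Fin n → X, ∏ t, ∑ z, F (q t) (x t) z
      = ∏ t, ∑ x, ∑ z, F (q t) x z := fun q => sum_pi_prod (fun t x => ∑ z, F (q t) x z)
  simp only [h2]
  have h3 := sum_pi_prod (fun (_ : Fin n) q => ∑ x, ∑ z, F q x z)
  rw [h3]
  simp

lemma tail_bound {Q X Z : Type*} [Fintype Q] [Fintype X] [Fintype Z]
    (pXgQ : Q → X → ℝ) (W : X → Z → ℝ) (PZ : Q → Z → ℝ)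
    (hX : ∀ q x, 0 ≤ pXgQ q x) (hW : ∀ x z, 0 ≤ W x z)
    (hPZ : ∀ q z, PZ q z = ∑ x, pXgQ q x * W x z) (c θ : ℝ) (hθ : 0 < θ) (n : ℕ)
    (q : Fin n → Q) (x : Fin n → X) (z : Fin n → Z) :
    (∏ t, pXgQ (q t) (x t)) * (∏ t, W (x t) (z t)) *
        (if ∏ t, W (x t) (z t) ≤ (2:ℝ) ^ (c * n) * ∏ t, PZ (q t) (z t) then (0:ℝ) else 1)
      ≤ ∏ t, (pXgQ (q t) (x t) * W (x t) (z t) *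
          (W (x t) (z t) / (PZ (q t) (z t)) * (2:ℝ) ^ (-c)) ^ θ) := by
  have hPZ0 : ∀ q z, 0 ≤ PZ q z := fun q z => by
    rw [hPZ]; exact Finset.sum_nonneg fun x _ => mul_nonneg (hX q x) (hW x z)
  have h2c : (0:ℝ) < 2 ^ (-c) := by positivity
  have hρ0 : ∀ t, 0 ≤ W (x t) (z t) / (PZ (q t) (z t)) * (2:ℝ) ^ (-c) := fun t =>
    mul_nonneg (div_nonneg (hW _ _) (hPZ0 _ _)) h2c.le
  have hR : 0 ≤ ∏ t, (pXgQ (q t) (x t) * W (x t) (z t) *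
          (W (x t) (z t) / (PZ (q t) (z t)) * (2:ℝ) ^ (-c)) ^ θ) :=
    Finset.prod_nonneg fun t _ => mul_nonneg (mul_nonneg (hX _ _) (hW _ _))
      (Real.rpow_nonneg (hρ0 t) _)
  split_ifs with h
  · simpa using hR
  rw [mul_one]
  by_cases hz : (∏ t, pXgQ (q t) (x t)) * (∏ t, W (x t) (z t)) = 0
  · rw [hz]; exact hR
  rw [Finset.prod_mul_distrib, Finset.prod_mul_distrib]
  refine le_mul_of_one_le_right (mul_nonneg (Finset.prod_nonneg fun t _ => hX _ _)
    (Finset.prod_nonneg fun t _ => hW _ _)) ?_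
  rw [Real.finsetProd_rpow _ _ fun t _ => hρ0 t]
  refine Real.one_le_rpow ?_ hθ.le
  rw [Finset.prod_mul_distrib, Finset.prod_div_distrib]
  have hx1 : ∀ t, pXgQ (q t) (x t) ≠ 0 := fun t =>
    Finset.prod_ne_zero_iff.1 (left_ne_zero_of_mul hz) t (Finset.mem_univ t)
  have hw1 : ∀ t, W (x t) (z t) ≠ 0 := fun t =>
    Finset.prod_ne_zero_iff.1 (right_ne_zero_of_mul hz) t (Finset.mem_univ t)
  have hpz : ∀ t, 0 < PZ (q t) (z t) := fun t => by
    rw [hPZ]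
    refine lt_of_lt_of_le (mul_pos (lt_of_le_of_ne (hX _ _) (hx1 t).symm)
      (lt_of_le_of_ne (hW _ _) (hw1 t).symm)) ?_
    exact Finset.single_le_sum (f := fun x' => pXgQ (q t) x' * W x' (z t))
      (fun x' _ => mul_nonneg (hX _ _) (hW _ _)) (Finset.mem_univ (x t))
  have hprod : 0 < ∏ t, PZ (q t) (z t) := Finset.prod_pos fun t _ => hpz t
  simp only [Finset.prod_const, Finset.card_univ, Fintype.card_fin]
  rw [← Real.rpow_natCast, ← Real.rpow_mul (by norm_num), neg_mul, Real.rpow_neg (by norm_num),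
    ← div_eq_mul_inv, div_div, le_div_iff₀ (by positivity), one_mul]
  push Not at h
  linarith

theorem main_bound
    {Q X Z : Type*} [Fintype Q] [Fintype X] [Fintype Z]
    (pQ : Q → ℝ) (pXgQ : Q → X → ℝ) (W : X → Z → ℝ)
    (hQ : IsPMF pQ) (hXgQ : ∀ q, IsPMF (pXgQ q)) (hW : ∀ x, IsPMF (W x))
    {I J S : Type*} [Fintype I] [Fintype J] [Fintype S]
    [DecidableEq I] [DecidableEq J] [DecidableEq S]
    (p0 : I → ℝ) (pc : J → ℝ) (w : S → ℝ) (h0 : IsPMF p0) (hc : IsPMF pc) (hw : IsPMF w)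
    (n : ℕ) (c θ : ℝ) (hθ : 0 < θ) :
    (∑ c : (I → (Fin n → Q)) × (I → J → S → (Fin n → X)),
        ((∏ i, iid pQ n (c.1 i)) *
          ∏ i, ∏ j, ∏ s, ∏ t : Fin n, pXgQ (c.1 i t) (c.2 i j s t)) *
        (∑ j, ∑ z : Fin n → Z,
          |pc j * (∑ i, p0 i * ∑ s, w s * ∏ t : Fin n, W (c.2 i j s t) (z t))
            - pc j * (∑ j', pc j' *
                (∑ i, p0 i * ∑ s, w s * ∏ t : Fin n, W (c.2 i j' s t) (z t)))|))
      ≤ 2 * (√((2:ℝ) ^ (c * n) * ∑ s, w s ^ 2) + 2 *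
        (∑ q, ∑ x, ∑ z, pQ q * pXgQ q x * W x z *
          (W x z / (∑ x', pXgQ q x' * W x' z) * (2:ℝ) ^ (-c)) ^ θ) ^ n) := by
  have hpq : IsPMF (iid pQ n) := isPMF_pi (fun _ : Fin n => pQ) (fun _ => hQ)
  have hP : ∀ q : Fin n → Q, IsPMF (fun x : Fin n → X => ∏ t, pXgQ (q t) (x t)) := fun q =>
    isPMF_pi (fun t : Fin n => pXgQ (q t)) (fun t => hXgQ (q t))
  have hV : ∀ x : Fin n → X, IsPMF (fun z : Fin n → Z => ∏ t, W (x t) (z t)) := fun x =>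
    isPMF_pi (fun t : Fin n => W (x t)) (fun t => hW (x t))
  refine (codebook_bound p0 pc w h0 hc (iid pQ n) hpq
    (fun q (x : Fin n → X) => ∏ t, pXgQ (q t) (x t)) hP (fun x (z : Fin n → Z) => ∏ t, W (x t) (z t))
    (fun q z => ∏ t, ∑ x', pXgQ (q t) x' * W x' (z t))).trans ?_
  refine mul_le_mul_of_nonneg_left ?_ (by norm_num)
  have hsc : ∀ q : Fin n → Q, _ := fun q => soft_cover (fun x : Fin n → X => ∏ t, pXgQ (q t) (x t))
    (hP q) w hw (fun x (z : Fin n → Z) => ∏ t, W (x t) (z t)) hV ((2:ℝ) ^ (c * n)) (by positivity)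
    (fun z => ∏ t, ∑ x', pXgQ (q t) x' * W x' (z t)) (fun z => by
      rw [← sum_pi_prod (fun t x' => pXgQ (q t) x' * W x' (z t))]
      exact Finset.sum_congr rfl fun x _ => by rw [Finset.prod_mul_distrib])
  refine (Finset.sum_le_sum fun q _ => mul_le_mul_of_nonneg_left (hsc q) (hpq.1 q)).trans ?_
  simp only [mul_add, Finset.sum_add_distrib]
  rw [← Finset.sum_mul, hpq.2, one_mul]
  refine add_le_add le_rfl ?_
  rw [← sum_triple_prod n (fun q x z => pQ q * pXgQ q x * W x z *
          (W x z / (∑ x', pXgQ q x' * W x' z) * (2:ℝ) ^ (-c)) ^ θ), Finset.mul_sum]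
  refine Finset.sum_le_sum fun q _ => ?_
  rw [mul_left_comm]
  refine mul_le_mul_of_nonneg_left ?_ (by norm_num)
  simp only [Finset.mul_sum]
  refine Finset.sum_le_sum fun x _ => Finset.sum_le_sum fun z _ => ?_
  have htb := tail_bound pXgQ W (fun q z => ∑ x', pXgQ q x' * W x' z) (fun q => (hXgQ q).1)
    (fun x => (hW x).1) (fun _ _ => rfl) c θ hθ n q x z
  have := mul_le_mul_of_nonneg_left htb (hpq.1 q)
  refine this.trans (le_of_eq ?_)
  unfold iid
  rw [← Finset.prod_mul_distrib]
  exact Finset.prod_congr rfl fun t _ => by ring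

lemma eventually_exp (a r : ℝ) (ha0 : 0 < a) (ha1 : a < 1) (hr0 : 0 ≤ r) (hr1 : r < 1) :
    ∃ β : ℝ, 0 < β ∧ ∀ᶠ n : ℕ in atTop, 2 * (a ^ n + 2 * r ^ n) ≤ (2:ℝ) ^ (-(β * n)) := by
  set b := max a r with hb
  have hb0 : 0 < b := lt_max_of_lt_left ha0
  have hb1 : b < 1 := max_lt ha1 hr1
  have hs0 : 0 < √b := Real.sqrt_pos.2 hb0
  have hs1 : √b < 1 := by rw [Real.sqrt_lt' one_pos]; simpa using hb1
  refine ⟨-Real.logb 2 (√b), by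
    have := Real.logb_neg (b := 2) (by norm_num) hs0 hs1
    linarith, ?_⟩
  have ht := tendsto_pow_atTop_nhds_zero_of_lt_one hs0.le hs1
  filter_upwards [ht.eventually (gt_mem_nhds (show (0:ℝ) < 1 / 6 by norm_num))] with n hn
  have e : (2:ℝ) ^ (-(-Real.logb 2 (√b) * n)) = √b ^ n := by
    rw [neg_mul, neg_neg, Real.rpow_mul (by norm_num), Real.rpow_logb (by norm_num) (by norm_num) hs0,
      Real.rpow_natCast]
  rw [e]
  have h1 : a ^ n ≤ b ^ n := pow_le_pow_left₀ ha0.le (le_max_left _ _) n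
  have h2 : r ^ n ≤ b ^ n := pow_le_pow_left₀ hr0 (le_max_right _ _) n
  have h3 : b ^ n = √b ^ n * √b ^ n := by
    rw [← mul_pow, Real.mul_self_sqrt hb0.le]
  have h4 : 0 < √b ^ n := pow_pos hs0 n
  nlinarith

/-- Lemma 2: secrecy from random coding with non-uniform
randomization; averaged over the random codebook, the secrecy metric vanishes
exponentially provided `lim (1/n) H₂(M_p) > I(X;Z|Q)`. -/
theorem statement14
    {Q X Z : Type*} [Fintype Q] [Fintype X] [Fintype Z]
    (pQ : Q → ℝ) (pXgQ : Q → X → ℝ) (W : X → Z → ℝ)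
    (hQ : IsPMF pQ) (hXgQ : ∀ q, IsPMF (pXgQ q)) (hW : ∀ x, IsPMF (W x))
    (R0 Rc Rp L : ℝ) (hR0 : 0 < R0) (hRc : 0 < Rc) (hRp : 0 < Rp)
    (pM0 : (n : ℕ) → Fin (e2 (R0 * n)) → ℝ)
    (pMc : (n : ℕ) → Fin (e2 (Rc * n)) → ℝ)
    (pMp : (n : ℕ) → Fin (e2 (Rp * n)) → ℝ)
    (hM0 : ∀ n, IsPMF (pM0 n)) (hMc : ∀ n, IsPMF (pMc n)) (hMp : ∀ n, IsPMF (pMp n))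
    -- `lim (1/n) H₂(M_p) = L`
    (hH2 : Tendsto (fun (n : ℕ) => H2 (pMp n) / n) atTop (nhds L))
    -- `I(X;Z|Q) < lim (1/n) H₂(M_p)`
    (hL : condMI (fun t : Q × X × Z => pQ t.1 * pXgQ t.1 t.2.1 * W t.2.1 t.2.2) < L) :
    ∃ β : ℝ, 0 < β ∧ ∀ᶠ (n : ℕ) in atTop,
      -- expectation over the random codebook `C_n = (Q^n(i), X^n(i,j,s))`
      (∑ c : (Fin (e2 (R0 * n)) → (Fin n → Q)) ×
             (Fin (e2 (R0 * n)) → Fin (e2 (Rc * n)) → Fin (e2 (Rp * n)) → (Fin n → X)),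
        ((∏ i, iid pQ n (c.1 i)) *
          ∏ i, ∏ j, ∏ s, ∏ t : Fin n, pXgQ (c.1 i t) (c.2 i j s t)) *
        -- `V(p_{M_c Z^n}, p_{M_c} p_{Z^n})` for the code `c`
        (∑ j : Fin (e2 (Rc * n)), ∑ z : Fin n → Z,
          |pMc n j * (∑ i, pM0 n i * ∑ s, pMp n s * ∏ t : Fin n, W (c.2 i j s t) (z t))
            - pMc n j * (∑ j' : Fin (e2 (Rc * n)), pMc n j' *
                (∑ i, pM0 n i * ∑ s, pMp n s * ∏ t : Fin n, W (c.2 i j' s t) (z t)))|))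
      ≤ (2:ℝ) ^ (-(β * n)) := by
  set I0 := condMI (fun t : Q × X × Z => pQ t.1 * pXgQ t.1 t.2.1 * W t.2.1 t.2.2) with hI0
  have hI := condMI_eq pQ pXgQ W hQ hXgQ hW
  rw [← hI0] at hI
  set c : ℝ := (I0 + L) / 2 with hcdef
  have hc1 : I0 < c := by rw [hcdef]; linarith
  have hc2 : c < L := by rw [hcdef]; linarith
  set d : ℝ := (c + L) / 2 with hd
  have hd1 : c < d := by rw [hd]; linarith
  have hd2 : d < L := by rw [hd]; linarith
  have h2c : (0:ℝ) < 2 ^ (-c) := by positivity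
  have hpmf : IsPMF (fun t : Q × X × Z => pQ t.1 * pXgQ t.1 t.2.1 * W t.2.1 t.2.2) := by
    refine ⟨fun t => mul_nonneg (mul_nonneg (hQ.1 _) ((hXgQ _).1 _)) ((hW _).1 _), ?_⟩
    simp only [Fintype.sum_prod_type, ← Finset.mul_sum, (hW _).2, (hXgQ _).2, mul_one, hQ.2]
  have hpos : ∀ t : Q × X × Z, pQ t.1 * pXgQ t.1 t.2.1 * W t.2.1 t.2.2 ≠ 0 →
      0 < W t.2.1 t.2.2 / ∑ x', pXgQ t.1 x' * W x' t.2.2 := by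
    rintro ⟨q, x, z⟩ h
    have hw : 0 < W x z := lt_of_le_of_ne ((hW x).1 z) (right_ne_zero_of_mul h).symm
    have hx : 0 < pXgQ q x := lt_of_le_of_ne ((hXgQ q).1 x)
      (right_ne_zero_of_mul (left_ne_zero_of_mul h)).symm
    refine div_pos hw (lt_of_lt_of_le (mul_pos hx hw) ?_)
    exact Finset.single_le_sum (f := fun x' => pXgQ q x' * W x' z)
      (fun x' _ => mul_nonneg ((hXgQ q).1 x') ((hW x').1 z)) (Finset.mem_univ x)
  obtain ⟨θ, hθ, hr⟩ := exists_chernoff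
    (fun t : Q × X × Z => pQ t.1 * pXgQ t.1 t.2.1 * W t.2.1 t.2.2)
    (fun t => W t.2.1 t.2.2 / (∑ x', pXgQ t.1 x' * W x' t.2.2) * (2:ℝ) ^ (-c)) hpmf
    (fun t ht => mul_pos (hpos t ht) h2c) (by
      have hl2 : 0 < Real.log 2 := Real.log_pos (by norm_num)
      have e : ∀ t : Q × X × Z, pQ t.1 * pXgQ t.1 t.2.1 * W t.2.1 t.2.2 *
          Real.log (W t.2.1 t.2.2 / (∑ x', pXgQ t.1 x' * W x' t.2.2) * (2:ℝ) ^ (-c))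
          = Real.log 2 * (pQ t.1 * pXgQ t.1 t.2.1 * W t.2.1 t.2.2 *
              Real.logb 2 (W t.2.1 t.2.2 / (∑ x', pXgQ t.1 x' * W x' t.2.2)))
            - c * Real.log 2 * (pQ t.1 * pXgQ t.1 t.2.1 * W t.2.1 t.2.2) := by
        intro t
        by_cases h : pQ t.1 * pXgQ t.1 t.2.1 * W t.2.1 t.2.2 = 0
        · rw [h]; ring
        · rw [Real.log_mul (hpos t h).ne' h2c.ne', Real.log_rpow (by norm_num), Real.logb]
          field_simp
          ring
      simp only [e]
      rw [Finset.sum_sub_distrib, ← Finset.mul_sum, ← Finset.mul_sum, hpmf.2]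
      have hI' : ∑ t : Q × X × Z, pQ t.1 * pXgQ t.1 t.2.1 * W t.2.1 t.2.2 *
              Real.logb 2 (W t.2.1 t.2.2 / (∑ x', pXgQ t.1 x' * W x' t.2.2)) = I0 := by
        rw [hI]; simp only [Fintype.sum_prod_type]
      rw [hI']
      nlinarith)
  simp only [Fintype.sum_prod_type] at hr
  set r := ∑ q, ∑ x, ∑ z, pQ q * pXgQ q x * W x z *
          (W x z / (∑ x', pXgQ q x' * W x' z) * (2:ℝ) ^ (-c)) ^ θ with hrdef
  have hr0 : 0 ≤ r := by
    refine Finset.sum_nonneg fun q _ => Finset.sum_nonneg fun x _ => Finset.sum_nonneg fun z _ => ?_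
    refine mul_nonneg (mul_nonneg (mul_nonneg (hQ.1 q) ((hXgQ q).1 x)) ((hW x).1 z))
      (Real.rpow_nonneg (mul_nonneg (div_nonneg ((hW x).1 z) ?_) h2c.le) _)
    exact Finset.sum_nonneg fun x' _ => mul_nonneg ((hXgQ q).1 x') ((hW x').1 z)
  obtain ⟨β, hβ, hev⟩ := eventually_exp ((2:ℝ) ^ (-((d - c) / 2))) r (by positivity)
    (Real.rpow_lt_one_of_one_lt_of_neg (by norm_num) (by linarith)) hr0 hr
  refine ⟨β, hβ, ?_⟩
  filter_upwards [hev, hH2.eventually (lt_mem_nhds hd2), eventually_gt_atTop 0] with n h1 h2 hn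
  have hn' : (0:ℝ) < n := by exact_mod_cast hn
  refine le_trans ?_ h1
  refine (main_bound pQ pXgQ W hQ hXgQ hW (pM0 n) (pMc n) (pMp n) (hM0 n) (hMc n) (hMp n)
    n c θ hθ).trans ?_
  refine mul_le_mul_of_nonneg_left (add_le_add ?_ le_rfl) (by norm_num)
  rw [lt_div_iff₀ hn'] at h2
  have hsum : 0 < ∑ s, pMp n s ^ 2 := by
    refine lt_of_le_of_ne (Finset.sum_nonneg fun _ _ => sq_nonneg _) fun h => ?_
    have hz := (Finset.sum_eq_zero_iff_of_nonneg fun s _ => sq_nonneg (pMp n s)).1 h.symm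
    have : ∑ s, pMp n s = 0 := Finset.sum_eq_zero fun s hs => by simpa using hz s hs
    rw [(hMp n).2] at this
    exact one_ne_zero this
  have hS : ∑ s, pMp n s ^ 2 ≤ (2:ℝ) ^ (-(d * n)) := by
    rw [← Real.logb_le_iff_le_rpow (by norm_num) hsum]
    unfold H2 at h2
    linarith
  have e1 : ((2:ℝ) ^ (-((d - c) / 2))) ^ n = √((2:ℝ) ^ (c * n) * (2:ℝ) ^ (-(d * n))) := by
    rw [← Real.rpow_add (by norm_num), Real.sqrt_eq_rpow, ← Real.rpow_mul (by norm_num),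
      ← Real.rpow_natCast, ← Real.rpow_mul (by norm_num)]
    congr 1; ring
  rw [e1]
  exact Real.sqrt_le_sqrt (mul_le_mul_of_nonneg_left hS (by positivity))
end
end

section
/- Let (X, p_X) be a DMS on a finite alphabet X, let μ_X = min_{x ∈ supp(p_X)} p_X(x), and fix ε₁ > 0, R > 0, d_n ∈ ℕ, M_n = 2^{nR}. Let Φ : X^n × {1,…,2^{d_n}} → {1,…,M_n} be a uniformly random function (i.e., the values Φ(x^n, u) are i.i.d. uniform on {1,…,M_n} over all pairs (x^n, u)), and let U_{d_n} be uniform on {1,…,2^{d_n}} and independent of X^n and Φ. Then the expected uniformity metric satisfies E_Φ[ V(p_{Φ(X^n, U_{d_n})}, uniform on {1,…,M_n}) ] ≤ 4|X| e^{−n ε₁² μ_X} + 2^{(n/2)(R − (1 − 3ε₁) H(X) − d_n/n)}. -/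
open Finset Filter Real

attribute [local instance] Classical.propDecidable

noncomputable section

theorem aux_cross {Ω β : Type*} [Fintype Ω] [DecidableEq Ω] [Fintype β] (g : β → ℝ) (hg : ∑ b, g b = 0)
    (z z' : Ω) (h : z ≠ z') : ∑ Φ : Ω → β, g (Φ z) * g (Φ z') = 0 := by
  have key := Finset.prod_univ_sum (fun _ : Ω => (Finset.univ : Finset β))
    (fun i j => (if i = z then g j else 1) * (if i = z' then g j else 1))
  rw [Fintype.piFinset_univ] at key
  have h1 : ∏ i : Ω, ∑ j : β, ((if i = z then g j else 1) * (if i = z' then g j else 1)) = 0 := by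
    apply Finset.prod_eq_zero (Finset.mem_univ z)
    simp [h, hg]
  rw [h1] at key
  rw [key]
  apply Finset.sum_congr rfl
  intro Φ _
  rw [Finset.prod_mul_distrib]
  simp

theorem aux_diag {Ω β : Type*} [Fintype Ω] [DecidableEq Ω] [Fintype β] (g : β → ℝ)
    (hβ : (Fintype.card β : ℝ) ≠ 0) (z : Ω) :
    ∑ Φ : Ω → β, g (Φ z) = (∑ b, g b) / Fintype.card β * Fintype.card (Ω → β) := by
  have key := Finset.prod_univ_sum (fun _ : Ω => (Finset.univ : Finset β))
    (fun i j => (if i = z then g j else 1))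
  rw [Fintype.piFinset_univ] at key
  have h1 : ∏ i : Ω, ∑ j : β, (if i = z then g j else 1)
      = ∏ i : Ω, ((if i = z then (∑ b, g b) / Fintype.card β else 1) * Fintype.card β) := by
    apply Finset.prod_congr rfl
    intro i _
    by_cases hi : i = z
    · simp [hi]; field_simp
    · simp [hi]
  rw [h1, Finset.prod_mul_distrib] at key
  simp only [Finset.prod_ite_eq', Finset.mem_univ, if_true, Finset.prod_const, Finset.card_univ]
    at key
  rw [Fintype.card_fun]
  push_cast
  exact key.symm

theorem aux_var {Ω β : Type*} [Fintype Ω] [DecidableEq Ω] [Fintype β] (g : β → ℝ) (hg : ∑ b, g b = 0)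
    (hβ : (Fintype.card β : ℝ) ≠ 0) (w : Ω → ℝ) :
    ∑ Φ : Ω → β, (∑ z, w z * g (Φ z)) ^ 2
      = (∑ z, w z ^ 2) * ((∑ b, g b ^ 2) / Fintype.card β * Fintype.card (Ω → β)) := by
  have h1 : ∀ Φ : Ω → β, (∑ z, w z * g (Φ z)) ^ 2
      = ∑ z, ∑ z', w z * w z' * (g (Φ z) * g (Φ z')) := by
    intro Φ
    rw [sq, Finset.sum_mul_sum]
    refine Finset.sum_congr rfl fun z _ => Finset.sum_congr rfl fun z' _ => by ring
  simp_rw [h1]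
  rw [Finset.sum_comm, Finset.sum_mul]
  apply Finset.sum_congr rfl
  intro z _
  rw [Finset.sum_comm]
  rw [Finset.sum_eq_single z]
  · rw [← Finset.mul_sum]
    have := aux_diag (Ω := Ω) (fun b => g b ^ 2) hβ z
    rw [← this, sq]
    simp_rw [sq]
  · intro z' _ hne
    rw [← Finset.mul_sum, aux_cross g hg z z' (Ne.symm hne), mul_zero]
  · simp

theorem aux_abs {Ω : Type*} [Fintype Ω] [DecidableEq Ω] (M : ℕ) (hM : 0 < M) (w : Ω → ℝ) (B : ℝ) (hB : 0 ≤ B)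
    (hw : (M : ℝ) * ∑ z, w z ^ 2 ≤ B ^ 2) (m : Fin M) :
    (M : ℝ) * ∑ Φ : Ω → Fin M, |∑ z, w z * ((if Φ z = m then (1:ℝ) else 0) - 1 / M)|
      ≤ Fintype.card (Ω → Fin M) * B := by
  have hM' : (0:ℝ) < M := by exact_mod_cast hM
  set g : Fin M → ℝ := fun b => (if b = m then (1:ℝ) else 0) - 1 / M with hgdef
  have hg : ∑ b, g b = 0 := by
    simp [hgdef, Finset.sum_sub_distrib]
    field_simp
    simp
  have hg2 : ∑ b, g b ^ 2 ≤ 1 := by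
    have e : ∀ b, g b ^ 2 = (if b = m then (1:ℝ) else 0) * (1 - 1 / M) - 1 / M * g b := by
      intro b
      simp only [hgdef]
      split_ifs <;> ring
    simp_rw [e]
    rw [Finset.sum_sub_distrib, ← Finset.mul_sum, hg, ← Finset.sum_mul]
    simp
  have hv := aux_var (Ω := Ω) g hg (by simpa using hM'.ne') w
  have cs := sq_sum_le_card_mul_sum_sq (s := (Finset.univ : Finset (Ω → Fin M)))
    (f := fun Φ => |∑ z, w z * g (Φ z)|)
  simp only [sq_abs] at cs
  rw [hv] at cs
  simp only [Finset.card_univ, Fintype.card_fin] at cs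
  set N : ℝ := (Fintype.card (Ω → Fin M) : ℝ) with hN
  have hN0 : 0 ≤ N := Nat.cast_nonneg _
  set S := ∑ z, w z ^ 2 with hS
  have hS0 : 0 ≤ S := Finset.sum_nonneg fun z _ => sq_nonneg _
  set T := ∑ Φ : Ω → Fin M, |∑ z, w z * g (Φ z)| with hT
  change (M:ℝ) * T ≤ N * B
  apply le_of_sq_le_sq _ (by positivity)
  calc ((M:ℝ) * T) ^ 2 = M ^ 2 * T ^ 2 := by ring
    _ ≤ M ^ 2 * (N * (S * ((∑ b, g b ^ 2) / M * N))) := by gcongr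
    _ = M * S * N ^ 2 * (∑ b, g b ^ 2) := by field_simp
    _ ≤ M * S * N ^ 2 * 1 := by gcongr
    _ ≤ B ^ 2 * N ^ 2 := by rw [mul_one]; gcongr
    _ = (N * B) ^ 2 := by ring

/-- one-shot version -/
theorem aux_main {Ω : Type*} [Fintype Ω] [DecidableEq Ω] (M : ℕ) (hM : 0 < M) (w : Ω → ℝ) (hw0 : ∀ z, 0 ≤ w z)
    (hw1 : ∑ z, w z = 1) (A : Ω → Prop) (B : ℝ) (hB : 0 ≤ B)
    (hw : (M : ℝ) * ∑ z, (if A z then w z else 0) ^ 2 ≤ B ^ 2) :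
    ∑ Φ : Ω → Fin M, ∑ m : Fin M, |(∑ z, w z * (if Φ z = m then (1:ℝ) else 0)) - 1 / M|
      ≤ Fintype.card (Ω → Fin M) * (2 * (∑ z, if A z then 0 else w z) + B) := by
  have hM' : (0:ℝ) < M := by exact_mod_cast hM
  have h1 : ∀ (Φ : Ω → Fin M) (m : Fin M),
      |(∑ z, w z * (if Φ z = m then (1:ℝ) else 0)) - 1 / M|
      ≤ |∑ z, (if A z then w z else 0) * ((if Φ z = m then (1:ℝ) else 0) - 1 / M)|
        + ∑ z, (if A z then 0 else w z) * ((if Φ z = m then (1:ℝ) else 0) + 1 / M) := by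
    intro Φ m
    have e : (∑ z, w z * (if Φ z = m then (1:ℝ) else 0)) - 1 / M
        = (∑ z, (if A z then w z else 0) * ((if Φ z = m then (1:ℝ) else 0) - 1 / M))
        + ∑ z, (if A z then 0 else w z) * ((if Φ z = m then (1:ℝ) else 0) - 1 / M) := by
      have : (1:ℝ) / M = ∑ z, w z * (1 / M) := by rw [← Finset.sum_mul, hw1, one_mul]
      rw [← Finset.sum_add_distrib]
      conv_lhs => rw [this]
      rw [← Finset.sum_sub_distrib]
      apply Finset.sum_congr rfl
      intro z _
      by_cases hA : A z <;> simp only [hA, if_true, if_false] <;> ring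
    rw [e]
    refine (abs_add_le _ _).trans ?_
    gcongr
    refine (Finset.abs_sum_le_sum_abs _ _).trans ?_
    apply Finset.sum_le_sum
    intro z _
    have h0 : 0 ≤ (if A z then 0 else w z) := by split_ifs; exact le_rfl; exact hw0 z
    rw [abs_mul, abs_of_nonneg h0]
    gcongr
    have : (0:ℝ) ≤ 1 / M := by positivity
    split_ifs
    · rw [abs_le]; constructor <;> linarith
    · rw [abs_le]; constructor <;> linarith
  have h2 : ∀ Φ : Ω → Fin M,
      ∑ m : Fin M, ∑ z, (if A z then 0 else w z) * ((if Φ z = m then (1:ℝ) else 0) + 1 / M)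
      = 2 * (∑ z, if A z then 0 else w z) := by
    intro Φ
    rw [Finset.sum_comm, Finset.mul_sum]
    apply Finset.sum_congr rfl
    intro z _
    rw [← Finset.mul_sum, Finset.sum_add_distrib]
    simp
    rw [mul_inv_cancel₀ hM'.ne']
    split_ifs <;> ring
  calc _ ≤ ∑ Φ : Ω → Fin M, ∑ m : Fin M,
        (|∑ z, (if A z then w z else 0) * ((if Φ z = m then (1:ℝ) else 0) - 1 / M)|
        + ∑ z, (if A z then 0 else w z) * ((if Φ z = m then (1:ℝ) else 0) + 1 / M)) :=
        Finset.sum_le_sum fun Φ _ => Finset.sum_le_sum fun m _ => h1 Φ m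
    _ = (∑ m : Fin M, ∑ Φ : Ω → Fin M,
        |∑ z, (if A z then w z else 0) * ((if Φ z = m then (1:ℝ) else 0) - 1 / M)|)
        + Fintype.card (Ω → Fin M) * (2 * (∑ z, if A z then 0 else w z)) := by
        simp_rw [Finset.sum_add_distrib, h2]
        rw [Finset.sum_comm]
        simp only [Finset.sum_const, Finset.card_univ, nsmul_eq_mul]
    _ ≤ (∑ m : Fin M, Fintype.card (Ω → Fin M) * B / M)
        + Fintype.card (Ω → Fin M) * (2 * (∑ z, if A z then 0 else w z)) := by
        gcongr with m
        rw [le_div_iff₀' hM']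
        exact aux_abs M hM (fun z => if A z then w z else 0) B hB hw m
    _ = _ := by
        rw [Finset.sum_const, Finset.card_univ, Fintype.card_fin, nsmul_eq_mul]
        field_simp
        ring

theorem aux_exp (x : ℝ) (hx : 0 ≤ x) : Real.exp (-x) ≤ 1 - x + x ^ 2 / 2 := by
  have h := Real.quadratic_le_exp_of_nonneg hx
  have hp := Real.exp_pos (-x)
  have hm : Real.exp (-x) * Real.exp x = 1 := by rw [← Real.exp_add]; simp
  have h2 : Real.exp (-x) * (1 + x + x ^ 2 / 2) ≤ 1 := by
    calc _ ≤ Real.exp (-x) * Real.exp x := by gcongr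
      _ = 1 := hm
  have h3 : (1:ℝ) ≤ (1 - x + x ^ 2 / 2) * (1 + x + x ^ 2 / 2) := by nlinarith [sq_nonneg (x ^ 2)]
  have h4 : 0 < 1 + x + x ^ 2 / 2 := by positivity
  exact le_of_mul_le_mul_right (h2.trans h3) h4

def cnt {X : Type*} {n : ℕ} (x : Fin n → X) (a : X) : ℝ := ∑ i, if x i = a then 1 else 0

theorem aux_iid_prod {X : Type*} [Fintype X] (p : X → ℝ) (n : ℕ) (f : X → ℝ) :
    ∑ x : Fin n → X, iid p n x * ∏ i, f (x i) = (∑ b, p b * f b) ^ n := by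
  have key := Finset.prod_univ_sum (fun _ : Fin n => (Finset.univ : Finset X))
    (fun _ j => p j * f j)
  rw [Fintype.piFinset_univ] at key
  simp only [Finset.prod_const, Finset.card_univ, Fintype.card_fin] at key
  rw [key]
  refine Finset.sum_congr rfl fun x _ => ?_
  rw [iid, Finset.prod_mul_distrib]

theorem aux_iid_sum {X : Type*} [Fintype X] (p : X → ℝ) (hp : IsPMF p) (n : ℕ) :
    ∑ x : Fin n → X, iid p n x = 1 := by
  have := aux_iid_prod p n (fun _ => 1)
  simpa [hp.2] using this

theorem aux_iid_nonneg {X : Type*} [Fintype X] (p : X → ℝ) (hp : IsPMF p) (n : ℕ)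
    (x : Fin n → X) : 0 ≤ iid p n x := Finset.prod_nonneg fun i _ => hp.1 _

theorem aux_chernoff {X : Type*} [Fintype X] (p : X → ℝ) (hp : IsPMF p) (n : ℕ) (δ : ℝ)
    (hδ : 0 ≤ δ) (a : X) :
    ∑ x : Fin n → X, (if cnt x a < (1 - δ) * n * p a then iid p n x else 0)
      ≤ Real.exp (-(n * δ ^ 2 * p a / 2)) := by
  have hpa := hp.1 a
  calc _ ≤ ∑ x : Fin n → X, Real.exp (δ * ((1 - δ) * n * p a))
            * (iid p n x * ∏ i, (if x i = a then Real.exp (-δ) else 1)) := by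
        apply Finset.sum_le_sum
        intro x _
        have h0 := aux_iid_nonneg p hp n x
        have e : ∏ i, (if x i = a then Real.exp (-δ) else 1) = Real.exp (-δ * cnt x a) := by
          rw [cnt, Finset.mul_sum, Real.exp_sum]
          refine Finset.prod_congr rfl fun i _ => ?_
          split_ifs <;> simp
        rw [e]
        have e2 : Real.exp (δ * ((1 - δ) * n * p a)) * (iid p n x * Real.exp (-δ * cnt x a))
          = iid p n x * Real.exp (δ * ((1 - δ) * n * p a - cnt x a)) := by
          rw [mul_left_comm, ← Real.exp_add]; ring_nf
        rw [e2]
        split_ifs with h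
        · apply le_mul_of_one_le_right h0
          apply Real.one_le_exp
          apply mul_nonneg hδ; linarith
        · positivity
    _ = Real.exp (δ * ((1 - δ) * n * p a)) * (1 + p a * (Real.exp (-δ) - 1)) ^ n := by
        rw [← Finset.mul_sum, aux_iid_prod p n (fun b => if b = a then Real.exp (-δ) else 1)]
        congr 2
        have : ∀ b, p b * (if b = a then Real.exp (-δ) else 1)
            = p b + (if b = a then p b * (Real.exp (-δ) - 1) else 0) := by
          intro b; split_ifs <;> ring
        simp_rw [this]
        rw [Finset.sum_add_distrib, hp.2]
        simp
    _ ≤ Real.exp (δ * ((1 - δ) * n * p a)) * (Real.exp (p a * (-δ + δ ^ 2 / 2))) ^ n := by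
        have hle1 : p a ≤ 1 := by
          rw [← hp.2]; exact Finset.single_le_sum (fun b _ => hp.1 b) (Finset.mem_univ a)
        have hb : 0 ≤ 1 + p a * (Real.exp (-δ) - 1) := by
          nlinarith [Real.exp_pos (-δ), mul_nonneg hpa (Real.exp_pos (-δ)).le]
        gcongr
        have h1 := aux_exp δ hδ
        have h2 := Real.add_one_le_exp (p a * (-δ + δ ^ 2 / 2))
        have h3 : p a * (Real.exp (-δ) - 1) ≤ p a * (-δ + δ ^ 2 / 2) := by
          gcongr; linarith
        linarith
    _ = _ := by
        rw [← Real.exp_nat_mul, ← Real.exp_add]; ring_nf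

theorem aux_typ {X : Type*} [Fintype X] (p : X → ℝ) (hp : IsPMF p) (n : ℕ) (δ : ℝ)
    (x : Fin n → X) (h : ∀ a, (1 - δ) * n * p a ≤ cnt x a) :
    iid p n x ≤ (2:ℝ) ^ (-(n * ((1 - δ) * Hsh p))) := by
  by_cases h0 : ∃ i, p (x i) = 0
  · obtain ⟨i, hi⟩ := h0
    rw [iid, Finset.prod_eq_zero (Finset.mem_univ i) hi]
    positivity
  push Not at h0
  have hle1 : ∀ a, p a ≤ 1 := fun a => by
    rw [← hp.2]; exact Finset.single_le_sum (fun b _ => hp.1 b) (Finset.mem_univ a)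
  have hpos : 0 < iid p n x := Finset.prod_pos fun i _ => lt_of_le_of_ne (hp.1 _) (h0 i).symm
  rw [← Real.logb_le_iff_le_rpow one_lt_two hpos, iid, Real.logb_prod _ _ (fun i _ => h0 i)]
  have e : ∑ i, Real.logb 2 (p (x i)) = ∑ a, cnt x a * Real.logb 2 (p a) := by
    simp_rw [cnt, Finset.sum_mul]
    rw [Finset.sum_comm]
    refine Finset.sum_congr rfl fun i _ => ?_
    simp
  rw [e, Hsh]
  have : -(n * ((1 - δ) * -∑ a, p a * Real.logb 2 (p a)))
      = ∑ a, (1 - δ) * n * p a * Real.logb 2 (p a) := by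
    simp_rw [mul_assoc, ← Finset.mul_sum]; ring
  rw [this]
  apply Finset.sum_le_sum
  intro a _
  exact mul_le_mul_of_nonpos_right (h a)
    (Real.logb_nonpos one_lt_two (hp.1 a) (hle1 a))

theorem aux_atyp {X : Type*} [Fintype X] (p : X → ℝ) (hp : IsPMF p) (n : ℕ) (ε μ : ℝ)
    (hε : 0 < ε) (hμ0 : ∀ a, 0 < p a → μ ≤ p a) :
    ∑ x : Fin n → X, (if ∀ a, (1 - 3 * ε) * n * p a ≤ cnt x a then 0 else iid p n x)
      ≤ Fintype.card X * Real.exp (-(n * ε ^ 2 * μ)) := by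
  calc _ ≤ ∑ x : Fin n → X, ∑ a,
        (if cnt x a < (1 - 3 * ε) * n * p a then iid p n x else 0) := by
        apply Finset.sum_le_sum
        intro x _
        have h0 := aux_iid_nonneg p hp n x
        have hnn : ∀ a ∈ Finset.univ,
            0 ≤ (if cnt x a < (1 - 3 * ε) * n * p a then iid p n x else 0) := by
          intro a _; split_ifs; exact h0; exact le_rfl
        split_ifs with h
        · exact Finset.sum_nonneg hnn
        · push Not at h
          obtain ⟨a, ha⟩ := h
          have := Finset.single_le_sum hnn (Finset.mem_univ a)
          rwa [if_pos ha] at this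
    _ = ∑ a, ∑ x : Fin n → X,
        (if cnt x a < (1 - 3 * ε) * n * p a then iid p n x else 0) := Finset.sum_comm
    _ ≤ ∑ a : X, Real.exp (-(n * ε ^ 2 * μ)) := by
        apply Finset.sum_le_sum
        intro a _
        rcases (hp.1 a).eq_or_lt with h | h
        · rw [← h]
          have : ∀ x : Fin n → X, ¬ cnt x a < 0 := fun x =>
            not_lt.mpr (Finset.sum_nonneg fun i _ => by split_ifs <;> norm_num)
          simp [this]
          positivity
        · refine (aux_chernoff p hp n (3 * ε) (by positivity) a).trans ?_
          apply Real.exp_le_exp.mpr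
          have h1 : (n:ℝ) * ε ^ 2 * μ ≤ n * ε ^ 2 * p a := by gcongr; exact hμ0 a h
          have h2 : 0 ≤ (n:ℝ) * ε ^ 2 * p a := by positivity
          nlinarith
    _ = _ := by simp

set_option maxHeartbeats 400000

/-- expected uniformity of the output of a uniformly random binning
encoder. -/
theorem statement15 {X : Type*} [Fintype X] (pX : X → ℝ) (hX : IsPMF pX)
    (μ : ℝ) (hμ : μ = sInf {r : ℝ | ∃ x, 0 < pX x ∧ r = pX x})
    (ε₁ R : ℝ) (hε₁ : 0 < ε₁) (hR : 0 < R)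
    (n d M : ℕ) (hn : 1 ≤ n)
    -- `M_n = 2^{nR}`
    (hM : (M : ℝ) = (2:ℝ) ^ ((n : ℝ) * R)) :
    -- expectation over the uniformly random function `Φ`
    (1 / (Fintype.card (((Fin n → X) × Fin (2 ^ d)) → Fin M) : ℝ)) *
      ∑ Φ : ((Fin n → X) × Fin (2 ^ d)) → Fin M,
        VD (fun m : Fin M =>
              ∑ x : Fin n → X, ∑ u : Fin (2 ^ d),
                iid pX n x * (1 / (2:ℝ) ^ d) * (if Φ (x, u) = m then 1 else 0))
           (fun _ => 1 / (M : ℝ))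
      ≤ 4 * (Fintype.card X : ℝ) * Real.exp (-((n : ℝ) * ε₁ ^ 2 * μ))
        + (2:ℝ) ^ (((n : ℝ) / 2) * (R - (1 - 3 * ε₁) * Hsh pX - (d : ℝ) / n)) := by
  have hμ0 : ∀ a, 0 < pX a → μ ≤ pX a := by
    intro a ha
    rw [hμ]
    apply csInf_le
    · refine ⟨0, ?_⟩
      rintro r ⟨x, hx, rfl⟩
      exact hx.le
    · exact ⟨a, ha, rfl⟩
  have hMr : (0:ℝ) < M := by rw [hM]; positivity
  have hMp : 0 < M := by exact_mod_cast hMr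
  have hn' : (n:ℝ) ≠ 0 := by positivity
  set δ := 3 * ε₁ with hδ
  set B : ℝ := (2:ℝ) ^ (((n : ℝ) / 2) * (R - (1 - δ) * Hsh pX - (d : ℝ) / n)) with hBdef
  have hB : 0 ≤ B := by positivity
  set q : ℝ := (2:ℝ) ^ (-(n * ((1 - δ) * Hsh pX))) with hq
  have hB2 : B ^ 2 = M * (1 / (2:ℝ) ^ d * q) := by
    rw [hM, hBdef, hq, ← Real.rpow_natCast, ← Real.rpow_mul (by norm_num), one_div,
      ← Real.rpow_natCast 2 d, ← Real.rpow_neg (by norm_num), ← Real.rpow_add (by norm_num),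
      ← Real.rpow_add (by norm_num)]
    congr 1
    push_cast
    field_simp
    ring
  let w : (Fin n → X) × Fin (2 ^ d) → ℝ := fun z => iid pX n z.1 * (1 / (2:ℝ) ^ d)
  obtain ⟨A, hAdef⟩ : ∃ A : (Fin n → X) × Fin (2 ^ d) → Prop,
      ∀ z, A z ↔ ∀ a, (1 - δ) * n * pX a ≤ cnt z.1 a := ⟨_, fun _ => Iff.rfl⟩
  have hsum : ∀ f : (Fin n → X) → ℝ,
      ∑ z : (Fin n → X) × Fin (2 ^ d), f z.1 * (1 / (2:ℝ) ^ d) = ∑ x, f x := by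
    intro f
    rw [Fintype.sum_prod_type]
    refine Finset.sum_congr rfl fun x _ => ?_
    simp only [Finset.sum_const, Finset.card_univ, Fintype.card_fin, nsmul_eq_mul]
    push_cast
    field_simp
  have hw0 : ∀ z, 0 ≤ w z := fun z => mul_nonneg (aux_iid_nonneg pX hX n _) (by positivity)
  have hw1 : ∑ z, w z = 1 := (hsum (iid pX n)).trans (aux_iid_sum pX hX n)
  have hw : (M : ℝ) * ∑ z, (if A z then w z else 0) ^ 2 ≤ B ^ 2 := by
    rw [hB2]
    gcongr
    have h1 : ∀ z, (if A z then w z else 0) ^ 2 ≤ w z * (1 / (2:ℝ) ^ d * q) := by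
      intro z
      have := hw0 z
      split_ifs with h
      · rw [sq]
        gcongr
        have := aux_typ pX hX n δ z.1 ((hAdef z).mp h)
        simp only [w]
        rw [mul_comm]
        gcongr
      · rw [zero_pow two_ne_zero]; positivity
    refine (Finset.sum_le_sum fun z _ => h1 z).trans ?_
    rw [← Finset.sum_mul, hw1, one_mul]
  have hA : (∑ z, if A z then 0 else w z) ≤ Fintype.card X * Real.exp (-(n * ε₁ ^ 2 * μ)) := by
    refine le_trans (le_of_eq ?_) (aux_atyp pX hX n ε₁ μ hε₁ hμ0)
    rw [← hsum]
    refine Finset.sum_congr rfl fun z _ => ?_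
    simp only [hAdef, w, hδ]
    split_ifs <;> simp
  have main := aux_main M hMp w hw0 hw1 A B hB hw
  have : Nonempty (Fin M) := ⟨⟨0, hMp⟩⟩
  have hc : (0:ℝ) < Fintype.card (((Fin n → X) × Fin (2 ^ d)) → Fin M) := by
    exact_mod_cast Fintype.card_pos
  rw [one_div, inv_mul_le_iff₀ hc]
  have hexp := Real.exp_pos (-(n * ε₁ ^ 2 * μ))
  calc _ = ∑ Φ : ((Fin n → X) × Fin (2 ^ d)) → Fin M, ∑ m : Fin M,
        |(∑ z, w z * (if Φ z = m then (1:ℝ) else 0)) - 1 / M| := by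
        refine Finset.sum_congr rfl fun Φ _ => ?_
        rw [VD]
        refine Finset.sum_congr rfl fun m _ => ?_
        rw [Fintype.sum_prod_type]
    _ ≤ _ := main
    _ ≤ _ := by
        refine mul_le_mul_of_nonneg_left ?_ hc.le
        have : (0:ℝ) ≤ Fintype.card X * Real.exp (-(n * ε₁ ^ 2 * μ)) := by positivity
        linarith
end
end

section
/- Let M_c, M_p, Z^n take values in finite sets, with M_c and M_p independent, and let Z^n be generated from (M_c, M_p) through a fixed conditional distribution p_{Z^n | M_c, M_p}. Let p̃ denote the joint distribution obtained by replacing the distribution of M_p with the uniform distribution on its range (keeping p_{M_c} and p_{Z^n | M_c, M_p} unchanged). Suppose that V(p_{M_p}, uniform) ≤ ε and that max_{m_c} V(p̃_{Z^n | M_c = m_c}, p̃_{Z^n}) ≤ ε. Then max_{m_c} V(p_{Z^n | M_c = m_c}, p_{Z^n}) ≤ 3ε. -/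
open Finset Filter Real

attribute [local instance] Classical.propDecidable

noncomputable section

theorem vd_tri_aux {α : Type*} [Fintype α] (p q r : α → ℝ) : VD p r ≤ VD p q + VD q r := by
  unfold VD
  rw [← Finset.sum_add_distrib]
  exact Finset.sum_le_sum fun a _ => abs_sub_le _ _ _

theorem vd_symm_aux {α : Type*} [Fintype α] (p q : α → ℝ) : VD p q = VD q p := by
  unfold VD
  exact Finset.sum_congr rfl fun a _ => abs_sub_comm _ _

/-- data processing -/
theorem vd_dp_aux {α β : Type*} [Fintype α] [Fintype β] (p q : α → ℝ) (w : α → β → ℝ)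
    (hw : ∀ a, IsPMF (w a)) :
    VD (fun z => ∑ a, p a * w a z) (fun z => ∑ a, q a * w a z) ≤ VD p q := by
  unfold VD
  calc ∑ z, |∑ a, p a * w a z - ∑ a, q a * w a z|
      ≤ ∑ z, ∑ a, |p a - q a| * w a z := by
        refine Finset.sum_le_sum fun z _ => ?_
        rw [← Finset.sum_sub_distrib]
        refine (Finset.abs_sum_le_sum_abs _ _).trans (le_of_eq ?_)
        refine Finset.sum_congr rfl fun a _ => ?_
        rw [← sub_mul, abs_mul, abs_of_nonneg ((hw a).1 z)]
    _ = ∑ a, |p a - q a| := by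
        rw [Finset.sum_comm]
        refine Finset.sum_congr rfl fun a _ => ?_
        rw [← Finset.mul_sum, (hw a).2, mul_one]

/-- convexity -/
theorem vd_conv_aux {α β : Type*} [Fintype α] [Fintype β] (p : α → ℝ) (hp : IsPMF p)
    (v w : α → β → ℝ) (ε : ℝ) (h : ∀ a, VD (v a) (w a) ≤ ε) :
    VD (fun z => ∑ a, p a * v a z) (fun z => ∑ a, p a * w a z) ≤ ε := by
  calc VD (fun z => ∑ a, p a * v a z) (fun z => ∑ a, p a * w a z)
      ≤ ∑ z, ∑ a, p a * |v a z - w a z| := by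
        refine Finset.sum_le_sum fun z _ => ?_
        simp only
        rw [← Finset.sum_sub_distrib]
        refine (Finset.abs_sum_le_sum_abs _ _).trans (le_of_eq ?_)
        refine Finset.sum_congr rfl fun a _ => ?_
        rw [← mul_sub, abs_mul, abs_of_nonneg (hp.1 a)]
    _ = ∑ a, p a * VD (v a) (w a) := by
        rw [Finset.sum_comm]
        exact Finset.sum_congr rfl fun a _ => by rw [← Finset.mul_sum]; rfl
    _ ≤ ∑ a, p a * ε := Finset.sum_le_sum fun a _ => mul_le_mul_of_nonneg_left (h a) (hp.1 a)
    _ = ε := by rw [← Finset.sum_mul, hp.2, one_mul]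

/-- robustness of the secrecy metric when the public message is
only approximately uniform. -/
theorem statement17 {Mc Mp Zt : Type*} [Fintype Mc] [Fintype Mp] [Fintype Zt] [Nonempty Mp]
    (pMc : Mc → ℝ) (pMp : Mp → ℝ) (k : Mc → Mp → Zt → ℝ)
    (hMc : IsPMF pMc) (hMp : IsPMF pMp) (hk : ∀ mc mp, IsPMF (k mc mp))
    (ε : ℝ)
    -- `V(p_{M_p}, uniform) ≤ ε`
    (h1 : VD pMp (fun _ => 1 / (Fintype.card Mp : ℝ)) ≤ ε)
    -- `max_{m_c} V(p̃_{Z^n|M_c=m_c}, p̃_{Z^n}) ≤ ε` (tilde: `M_p` replaced by uniform)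
    (h2 : ∀ mc,
      VD (fun z => ∑ mp, (1 / (Fintype.card Mp : ℝ)) * k mc mp z)
         (fun z => ∑ mc', pMc mc' * ∑ mp, (1 / (Fintype.card Mp : ℝ)) * k mc' mp z) ≤ ε) :
    -- `max_{m_c} V(p_{Z^n|M_c=m_c}, p_{Z^n}) ≤ 3ε`
    ∀ mc,
      VD (fun z => ∑ mp, pMp mp * k mc mp z)
         (fun z => ∑ mc', pMc mc' * ∑ mp, pMp mp * k mc' mp z) ≤ 3 * ε := by
  intro mc
  have A := fun mc => (vd_dp_aux pMp (fun _ => 1 / (Fintype.card Mp : ℝ)) (k mc) (hk mc)).trans h1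
  have B := vd_conv_aux pMc hMc _ _ ε A
  rw [vd_symm_aux] at B
  have T1 := vd_tri_aux (fun z => ∑ mp, pMp mp * k mc mp z)
    (fun z => ∑ mp, (1 / (Fintype.card Mp : ℝ)) * k mc mp z)
    (fun z => ∑ mc', pMc mc' * ∑ mp, pMp mp * k mc' mp z)
  have T2 := vd_tri_aux (fun z => ∑ mp, (1 / (Fintype.card Mp : ℝ)) * k mc mp z)
    (fun z => ∑ mc', pMc mc' * ∑ mp, (1 / (Fintype.card Mp : ℝ)) * k mc' mp z)
    (fun z => ∑ mc', pMc mc' * ∑ mp, pMp mp * k mc' mp z)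
  have A1 := A mc
  have C := h2 mc
  linarith
end
end

section
/- Let (V, p_V) be a DMS on a finite alphabet V, let μ_V = min_{r ∈ supp(p_V)} p_V(r), fix ε₀ > 0, and set δ = 2|V| e^{−n ε₀² μ_V}; assume δ < 1. Enumerate the ε₀-letter-typical set T_{ε₀}^n(V) as v^n(1),…,v^n(|T_{ε₀}^n(V)|), and define the encoder f_n that outputs m if the input equals v^n(m), and outputs an index drawn uniformly at random from {1,…,|T_{ε₀}^n(V)|} (using an independent uniform seed) if the input is not typical. Then for every m, the output distribution satisfies p_{f_n(V^n)}(m) ≤ 2^{−n(1 − ε₀) H(V)} / (1 − δ), and consequently the min-entropy of the encoder output satisfies H_∞(f_n(V^n)) ≥ n(1 − ε₀) H(V) + log(1 − δ). -/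
open Finset Filter Real

attribute [local instance] Classical.propDecidable

noncomputable section

namespace S18

/-! ### Numeric inequalities -/

lemma amgm (k : ℕ) (hk : 2 ≤ k) (x : ℝ) (hx1 : 1 ≤ x) (hu : 2 * (k:ℝ) * exp (-x) < 1) :
    (k:ℝ) * ((1 + 2 * √(k * x)) * exp (-x)) ^ (k - 1) * (1 - 2 * k * exp (-x)) ≤ 1 := by
  have hk2 : (2:ℝ) ≤ k := by exact_mod_cast hk
  have hu0 : 0 < exp (-x) := exp_pos _
  have hkc : ((k - 1 : ℕ) : ℝ) = k - 1 := by rw [Nat.cast_sub (by omega)]; simp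
  set u := exp (-x) with hu_def
  rcases le_or_gt x (k + 1) with h | h
  · have h1 : √(k * x) ≤ k + 1 / 2 := by
      apply Real.sqrt_le_iff.mpr
      constructor
      · linarith
      · nlinarith
    have h2 : (1 + 2 * √(k * x)) * u ≤ (2 * k + 2) * u := by
      apply mul_le_mul_of_nonneg_right _ hu0.le
      linarith
    have h3 : ((1 + 2 * √(k * x)) * u) ^ (k - 1) ≤ exp (((2 * k + 2) * u - 1) * (k - 1 : ℕ)) := by
      rw [mul_comm _ ((k - 1 : ℕ) : ℝ), Real.exp_nat_mul]
      apply pow_le_pow_left₀ (by positivity)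
      refine h2.trans ?_
      have := Real.add_one_le_exp ((2 * k + 2) * u - 1)
      linarith
    have h4 : (k:ℝ) * (1 - 2 * k * u) ≤ exp (k * (1 - 2 * k * u) - 1) := by
      have := Real.add_one_le_exp (k * (1 - 2 * k * u) - 1)
      linarith
    calc (k:ℝ) * ((1 + 2 * √(k * x)) * u) ^ (k - 1) * (1 - 2 * k * u)
        = ((1 + 2 * √(k * x)) * u) ^ (k - 1) * (k * (1 - 2 * k * u)) := by ring
      _ ≤ exp (((2 * k + 2) * u - 1) * (k - 1 : ℕ)) * exp (k * (1 - 2 * k * u) - 1) := by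
          apply mul_le_mul h3 h4 _ (exp_pos _).le
          apply mul_nonneg <;> linarith
      _ = exp (((2 * k + 2) * u - 1) * (k - 1 : ℕ) + (k * (1 - 2 * k * u) - 1)) := by
          rw [Real.exp_add]
      _ ≤ 1 := by
          rw [Real.exp_le_one_iff, hkc]
          nlinarith
  · have hx3 : 3 ≤ x := by linarith
    have h1 : 2 * √(k * x) ≤ k + x := by
      have : √(k * x) ≤ (k + x) / 2 := by
        apply Real.sqrt_le_iff.mpr
        constructor
        · linarith
        · nlinarith [sq_nonneg ((k:ℝ) - x)]
      linarith
    have h2 : 4 * x ≤ exp x := by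
      have e1 : exp x = exp 1 ^ 3 * exp (x - 3) := by
        rw [← Real.exp_nat_mul, ← Real.exp_add]; congr 1; push_cast; ring
      have e2 : (2.7:ℝ) ^ 3 ≤ exp 1 ^ 3 :=
        pow_le_pow_left₀ (by norm_num) (by linarith [Real.exp_one_gt_d9]) 3
      have e3 := Real.add_one_le_exp (x - 3)
      rw [e1]
      have : 12 * (x - 3 + 1) ≤ exp 1 ^ 3 * exp (x - 3) := by
        apply mul_le_mul _ e3 (by linarith) (by positivity)
        norm_num at e2 ⊢
        linarith
      linarith
    have h3 : exp x * u = 1 := by rw [hu_def, ← Real.exp_add]; simp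
    have h4 : (1 + 2 * √(k * x)) * u ≤ 1 / 2 := by nlinarith
    have h5 : ((1 + 2 * √(k * x)) * u) ^ (k - 1) ≤ (1 / 2) ^ (k - 1) :=
      pow_le_pow_left₀ (by positivity) h4 _
    have h6 : (k:ℝ) ≤ 2 ^ (k - 1) := by
      have : k - 1 < 2 ^ (k - 1) := Nat.lt_two_pow_self
      have : k ≤ 2 ^ (k - 1) := by omega
      exact_mod_cast this
    have h7 : (k:ℝ) * ((1 + 2 * √(k * x)) * u) ^ (k - 1) ≤ 1 := by
      calc _ ≤ (2:ℝ) ^ (k - 1) * (1 / 2) ^ (k - 1) := by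
            apply mul_le_mul h6 h5 (by positivity) (by positivity)
        _ = 1 := by rw [← mul_pow]; norm_num
    have h8 : 0 ≤ (k:ℝ) * ((1 + 2 * √(k * x)) * u) ^ (k - 1) := by positivity
    nlinarith [mul_pos (show (0:ℝ) < 2 * k by linarith) hu0]

lemma term_bound (k : ℝ) (hk : 0 ≤ k) (x y ε : ℝ) (hx1 : 1 ≤ x) (hxy : x ≤ y) (hε : 0 < ε)
    (hε1 : ε ≤ 1) :
    (1 + 2 * √(k * (y / ε ^ 2))) * exp (-(y / ε)) ≤ (1 + 2 * √(k * x)) * exp (-x) := by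
  have hx0 : 0 < x := by linarith
  set q := y / x with hq
  have hq1 : 1 ≤ q := by rw [hq, le_div_iff₀ hx0]; linarith
  have hy : y = q * x := by rw [hq]; field_simp
  have hi : 1 ≤ 1 / ε := by rw [le_div_iff₀ hε]; linarith
  set s := 1 / ε with hs
  have e1 : √(k * (y / ε ^ 2)) = √(k * x) * √q * s := by
    have : k * (y / ε ^ 2) = (k * x) * q * s ^ 2 := by rw [hy, hs]; field_simp
    rw [this, Real.sqrt_mul (by positivity), Real.sqrt_mul (by positivity),
      Real.sqrt_sq (by positivity)]
  have hsq : √q ≤ q := by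
    apply Real.sqrt_le_iff.mpr; constructor <;> nlinarith
  have hqs : 1 ≤ q * s := by nlinarith
  have e2 : 1 + 2 * √(k * (y / ε ^ 2)) ≤ (1 + 2 * √(k * x)) * (q * s) := by
    rw [e1]
    have : √(k * x) * √q * s ≤ √(k * x) * q * s := by gcongr
    nlinarith
  have e3 : q * s ≤ exp (x * (q * s - 1)) := by
    have := Real.add_one_le_exp (x * (q * s - 1))
    nlinarith
  have e4 : exp (-(y / ε)) = exp (-x) * exp (-(x * (q * s - 1))) := by
    rw [← Real.exp_add]; congr 1; rw [hy, hs]; field_simp; ring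
  have e5 : exp (x * (q * s - 1)) * exp (-(x * (q * s - 1))) = 1 := by
    rw [← Real.exp_add]; simp
  have e6 : q * s * exp (-(x * (q * s - 1))) ≤ 1 := by
    refine le_trans ?_ e5.le
    gcongr
  calc _ ≤ (1 + 2 * √(k * x)) * (q * s) * (exp (-x) * exp (-(x * (q * s - 1)))) := by
        rw [e4]; gcongr
    _ = (1 + 2 * √(k * x)) * exp (-x) * (q * s * exp (-(x * (q * s - 1)))) := by ring
    _ ≤ (1 + 2 * √(k * x)) * exp (-x) * 1 := by gcongr
    _ = _ := by ring

/-! ### Counts, product distribution -/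

/-- number of occurrences of `a` in `x` -/
def cnt {V : Type*} {n : ℕ} (x : Fin n → V) (a : V) : ℕ :=
  (Finset.univ.filter fun i => x i = a).card

/-- probability of a type class -/
def Q {V : Type*} [Fintype V] (p : V → ℝ) (n : ℕ) (N : V → ℕ) : ℝ :=
  ∑ v ∈ Finset.univ.filter (fun v : Fin n → V => cnt v = N), iid p n v

variable {V : Type*} [Fintype V]

lemma iid_nonneg (p : V → ℝ) (hp : IsPMF p) (n : ℕ) (v : Fin n → V) : 0 ≤ iid p n v :=
  Finset.prod_nonneg fun i _ => hp.1 _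

lemma sum_iid (p : V → ℝ) (hp : IsPMF p) (n : ℕ) : ∑ v, iid p n v = 1 := by
  unfold iid
  rw [← Fintype.piFinset_univ, Finset.sum_prod_piFinset]
  simp [hp.2]

lemma sum_cnt {n : ℕ} (v : Fin n → V) : ∑ a, cnt v a = n := by
  unfold cnt
  have := Finset.card_eq_sum_card_fiberwise (f := v) (s := Finset.univ) (t := Finset.univ)
    (by intro x _; simp)
  simpa using this.symm

lemma iid_eq_prod_pow (p : V → ℝ) (n : ℕ) (v : Fin n → V) :
    iid p n v = ∏ a, p a ^ cnt v a := by
  unfold iid cnt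
  rw [← Finset.prod_fiberwise Finset.univ v (fun i => p (v i))]
  apply Finset.prod_congr rfl
  intro a _
  rw [Finset.prod_congr rfl (g := fun _ => p a)]
  · simp
  · intro i hi
    simp at hi
    rw [hi]

lemma cnt_zero_of (p : V → ℝ) (n : ℕ) (v : Fin n → V) (h : iid p n v ≠ 0) (a : V)
    (ha : p a = 0) : cnt v a = 0 := by
  by_contra hc
  apply h
  rw [iid_eq_prod_pow]
  apply Finset.prod_eq_zero (Finset.mem_univ a)
  rw [ha, zero_pow hc]

lemma cnt_cons {n : ℕ} (c : V) (v : Fin n → V) (a : V) :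
    (cnt (Fin.cons c v : Fin (n+1) → V) a : ℝ) = (if c = a then 1 else 0) + cnt v a := by
  unfold cnt
  simp only [Finset.card_filter]
  rw [Fin.sum_univ_succ]
  simp

lemma sum_cons {n : ℕ} (f : (Fin (n+1) → V) → ℝ) :
    ∑ v, f v = ∑ c, ∑ w : Fin n → V, f (Fin.cons c w) := by
  rw [← Fintype.sum_prod_type']
  exact (Fintype.sum_equiv (Fin.consEquiv (fun _ => V)) _ _ (fun x => rfl)).symm

lemma iid_cons (p : V → ℝ) {n : ℕ} (c : V) (w : Fin n → V) :
    iid p (n+1) (Fin.cons c w) = p c * iid p n w := by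
  unfold iid
  rw [Fin.prod_univ_succ]; simp

lemma mean0 (p : V → ℝ) (hp : IsPMF p) (a : V) (n : ℕ) :
    ∑ v, iid p n v * ((cnt v a : ℝ) - n * p a) = 0 ∧
    ∑ v, iid p n v * ((cnt v a : ℝ) - n * p a) ^ 2 = n * p a * (1 - p a) := by
  induction n with
  | zero => simp [cnt]
  | succ n ih =>
    have hI := sum_iid p hp n
    have hA : ∑ c, p c * (if c = a then (1:ℝ) else 0) = p a := by simp
    have h0 : ∑ c, p c * ((if c = a then (1:ℝ) else 0) - p a) = 0 := by
      simp_rw [mul_sub]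
      rw [Finset.sum_sub_distrib, hA, ← Finset.sum_mul, hp.2]; ring
    have h2 : ∑ c, p c * ((if c = a then (1:ℝ) else 0) - p a)^2 = p a * (1 - p a) := by
      have : ∀ c, p c * ((if c = a then (1:ℝ) else 0) - p a)^2
          = p c * (if c = a then (1:ℝ) else 0) * (1 - 2 * p a) + p c * p a ^ 2 := by
        intro c; split_ifs <;> ring
      simp_rw [this]
      rw [Finset.sum_add_distrib, ← Finset.sum_mul, ← Finset.sum_mul, hA, hp.2]; ring
    constructor
    · rw [sum_cons]
      have : ∀ c (w : Fin n → V), iid p (n+1) (Fin.cons c w) *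
          ((cnt (Fin.cons c w : Fin (n+1) → V) a : ℝ) - (n+1 : ℕ) * p a)
          = (p c * ((if c = a then (1:ℝ) else 0) - p a)) * iid p n w
            + p c * (iid p n w * ((cnt w a : ℝ) - n * p a)) := by
        intro c w
        rw [iid_cons, cnt_cons]; push_cast; ring
      simp_rw [this, Finset.sum_add_distrib, ← Finset.mul_sum, ih.1, hI, mul_one, h0]
      simp
    · rw [sum_cons]
      have : ∀ c (w : Fin n → V), iid p (n+1) (Fin.cons c w) *
          ((cnt (Fin.cons c w : Fin (n+1) → V) a : ℝ) - (n+1 : ℕ) * p a) ^ 2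
          = (p c * ((if c = a then (1:ℝ) else 0) - p a) ^ 2) * iid p n w
            + (2 * (p c * ((if c = a then (1:ℝ) else 0) - p a)))
              * (iid p n w * ((cnt w a : ℝ) - n * p a))
            + p c * (iid p n w * ((cnt w a : ℝ) - n * p a) ^ 2) := by
        intro c w
        rw [iid_cons, cnt_cons]; push_cast; ring
      simp_rw [this, Finset.sum_add_distrib, ← Finset.mul_sum, ih.1, ih.2, hI, mul_one, h2]
      have h3 : ∑ c, p c * (n * p a * (1 - p a)) = n * p a * (1 - p a) := by
        rw [← Finset.sum_mul, hp.2, one_mul]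
      rw [h3]
      push_cast
      simp only [mul_zero, Finset.sum_const_zero]
      ring

lemma cheb (p : V → ℝ) (hp : IsPMF p) (a : V) (ha : 0 < p a) (n : ℕ) (hn : 0 < n) (k : ℝ)
    (hk : 0 < k) :
    ∑ v ∈ Finset.univ.filter (fun v : Fin n → V => k * (n * p a) < ((cnt v a : ℝ) - n * p a) ^ 2),
      iid p n v ≤ 1 / k := by
  have hn' : (0:ℝ) < n := by exact_mod_cast hn
  have hpos : 0 < k * (n * p a) := by positivity
  have h1 : (k * (n * p a)) * ∑ v ∈ Finset.univ.filter
      (fun v : Fin n → V => k * (n * p a) < ((cnt v a : ℝ) - n * p a) ^ 2), iid p n v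
      ≤ n * p a * (1 - p a) := by
    rw [← (mean0 p hp a n).2, Finset.mul_sum]
    refine le_trans (Finset.sum_le_sum (g := fun v => iid p n v * ((cnt v a : ℝ) - n * p a) ^ 2) ?_)
      (Finset.sum_le_sum_of_subset_of_nonneg (Finset.subset_univ _) ?_)
    · intro v hv
      simp only [Finset.mem_filter] at hv
      nlinarith [iid_nonneg p hp n v, hv.2]
    · intro v _ _
      have := iid_nonneg p hp n v
      positivity
  rw [le_div_iff₀ hk]
  have h2 : 0 < n * p a := by positivity
  by_contra hc
  push Not at hc
  nlinarith

/-! ### The mode of the multinomial -/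

lemma cnt_update {n : ℕ} (v : Fin n → V) (i : Fin n) (a b : V) (hab : a ≠ b) (hi : v i = a) (c : V) :
    cnt (Function.update v i b) c + (if c = a then 1 else 0) = cnt v c + (if c = b then 1 else 0) := by
  unfold cnt
  simp only [Finset.card_filter]
  rw [← Finset.add_sum_erase _ _ (Finset.mem_univ i),
    ← Finset.add_sum_erase Finset.univ (fun j => if v j = c then 1 else 0) (Finset.mem_univ i)]
  have : ∑ x ∈ Finset.univ.erase i, (if Function.update v i b x = c then 1 else 0)
      = ∑ x ∈ Finset.univ.erase i, (if v x = c then 1 else 0) := by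
    apply Finset.sum_congr rfl
    intro j hj
    rw [Function.update_of_ne (Finset.ne_of_mem_erase hj)]
  rw [this]
  simp only [Function.update_self, hi]
  by_cases h1 : c = a <;> by_cases h2 : c = b <;> simp [h1, h2, eq_comm] <;> grind

lemma Q_eq (p : V → ℝ) (n : ℕ) (N : V → ℕ) :
    Q p n N = ((Finset.univ.filter (fun v : Fin n → V => cnt v = N)).card : ℝ) * ∏ a, p a ^ N a := by
  unfold Q
  rw [Finset.sum_congr rfl (g := fun _ => ∏ a, p a ^ N a)]
  · simp
  · intro v hv
    simp at hv
    rw [iid_eq_prod_pow, hv]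

/-- moving one occurrence from `a` to `b` -/
def mv (N : V → ℕ) (a b : V) : V → ℕ :=
  fun c => N c + (if c = b then 1 else 0) - (if c = a then 1 else 0)

lemma card_double {n : ℕ} (N : V → ℕ) (a b : V) (hab : a ≠ b) (ha : 0 < N a) :
    (Finset.univ.filter (fun v : Fin n → V => cnt v = N)).card * N a
      = (Finset.univ.filter (fun v : Fin n → V => cnt v = mv N a b)).card * (N b + 1) := by
  have h1 : ∀ (M : V → ℕ) (c : V), (Finset.univ.filter (fun v : Fin n → V => cnt v = M)).card * M c
      = ((Finset.univ.filter (fun v : Fin n → V => cnt v = M)).sigma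
        (fun v => Finset.univ.filter (fun i => v i = c))).card := by
    intro M c
    rw [Finset.card_sigma, Finset.sum_congr rfl (g := fun _ => M c)]
    · simp
    · intro v hv
      simp at hv
      rw [← hv]; rfl
  have h2 : N b + 1 = mv N a b b := by simp [mv, hab.symm]
  rw [h2, h1, h1]
  refine Finset.card_bij' (fun x _ => ⟨Function.update x.1 x.2 b, x.2⟩)
    (fun x _ => ⟨Function.update x.1 x.2 a, x.2⟩) ?_ ?_ ?_ ?_
  · rintro ⟨v, i⟩ h
    simp only [Finset.mem_sigma, Finset.mem_filter, Finset.mem_univ, true_and] at h ⊢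
    refine ⟨?_, by simp⟩
    funext c
    have := cnt_update v i a b hab h.2 c
    rw [h.1] at this
    simp only [mv]
    omega
  · rintro ⟨v, i⟩ h
    simp only [Finset.mem_sigma, Finset.mem_filter, Finset.mem_univ, true_and] at h ⊢
    refine ⟨?_, by simp⟩
    funext c
    have := cnt_update v i b a hab.symm h.2 c
    rw [h.1] at this
    simp only [mv] at this
    by_cases hc : c = a
    · subst hc; simp [hab] at this; omega
    · simp [hc] at this; omega
  · rintro ⟨v, i⟩ h
    simp only [Finset.mem_sigma, Finset.mem_filter, Finset.mem_univ, true_and] at h ⊢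
    simp [← h.2]
  · rintro ⟨v, i⟩ h
    simp only [Finset.mem_sigma, Finset.mem_filter, Finset.mem_univ, true_and] at h ⊢
    simp [← h.2]

lemma prod_mv (p : V → ℝ) (N : V → ℕ) (a b : V) (hab : a ≠ b) (ha : 0 < N a) :
    (∏ c, p c ^ (mv N a b c)) * p a = (∏ c, p c ^ N c) * p b := by
  have e1 : p a = ∏ c, p c ^ (if c = a then 1 else 0) := by simp
  have e2 : p b = ∏ c, p c ^ (if c = b then 1 else 0) := by simp
  conv_lhs => rw [e1]
  conv_rhs => rw [e2]
  rw [← Finset.prod_mul_distrib, ← Finset.prod_mul_distrib]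
  apply Finset.prod_congr rfl
  intro c _
  rw [← pow_add, ← pow_add]
  congr 1
  simp only [mv]
  by_cases hc : c = a
  · subst hc; simp [hab]; omega
  · simp [hc]

lemma mode_step (p : V → ℝ) (hp : IsPMF p) (n : ℕ) (N : V → ℕ) (hQ : 0 < Q p n N)
    (hmax : ∀ M, Q p n M ≤ Q p n N) (a b : V) (ha : 0 < p a) (hb : 0 < p b) :
    (N a : ℝ) * p b ≤ (N b + 1) * p a := by
  rcases Nat.eq_zero_or_pos (N a) with h | h
  · rw [h]; simp; positivity
  by_cases hab : a = b
  · subst hab; nlinarith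
  have h1 : Q p n (mv N a b) * ((N b + 1) * p a) = Q p n N * (N a * p b) := by
    rw [Q_eq, Q_eq]
    have c := card_double (n := n) N a b hab h
    have c' : ((Finset.univ.filter (fun v : Fin n → V => cnt v = N)).card : ℝ) * N a
      = (Finset.univ.filter (fun v : Fin n → V => cnt v = mv N a b)).card * (N b + 1) := by
      exact_mod_cast c
    have d := prod_mv p N a b hab h
    calc _ = ((Finset.univ.filter (fun v : Fin n → V => cnt v = mv N a b)).card * (N b + 1))
              * ((∏ c, p c ^ (mv N a b c)) * p a) := by ring
      _ = _ := by rw [← c', d]; ring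
  have h2 := hmax (mv N a b)
  have h3 : 0 ≤ ((N b : ℝ) + 1) * p a := by positivity
  have h4 : Q p n N * (N a * p b) ≤ Q p n N * ((N b + 1) * p a) := by
    rw [← h1]; exact mul_le_mul_of_nonneg_right h2 h3
  exact le_of_mul_le_mul_left h4 hQ

/-- the support -/
def supp (p : V → ℝ) : Finset V := Finset.univ.filter fun a => 0 < p a

lemma mem_supp (p : V → ℝ) (a : V) : a ∈ supp p ↔ 0 < p a := by simp [supp]

lemma not_supp (p : V → ℝ) (hp : IsPMF p) (a : V) (h : a ∉ supp p) : p a = 0 := by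
  rw [mem_supp] at h; exact le_antisymm (not_lt.mp h) (hp.1 a)

lemma sum_supp (p : V → ℝ) (hp : IsPMF p) : ∑ a ∈ supp p, p a = 1 := by
  rw [← hp.2]
  exact Finset.sum_subset (Finset.subset_univ _) fun a _ h => not_supp p hp a h

lemma exists_mode (p : V → ℝ) (hp : IsPMF p) (n : ℕ) (W : ℝ)
    (hW : 0 < W)
    (hbox : ∃ B : Finset (V → ℕ), (B.card : ℝ) ≤ W ∧
      1 / ((supp p).card : ℝ) ≤ ∑ N ∈ B, Q p n N) (hk : 0 < (supp p).card) :
    ∃ N, (∀ M, Q p n M ≤ Q p n N) ∧ 1 / ((supp p).card * W) ≤ Q p n N := by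
  obtain ⟨B, hB, hs⟩ := hbox
  have hk' : (0:ℝ) < (supp p).card := by exact_mod_cast hk
  have hQ0 : ∀ M, 0 ≤ Q p n M := fun M => Finset.sum_nonneg fun v _ => iid_nonneg p hp n v
  have hBne : B.Nonempty := by
    by_contra h
    rw [Finset.not_nonempty_iff_eq_empty] at h
    subst h
    rw [Finset.sum_empty] at hs
    have : 0 < 1 / ((supp p).card : ℝ) := by positivity
    linarith
  set I := (Finset.univ.image (fun v : Fin n → V => cnt v)) ∪ B with hI
  obtain ⟨N, hN, hm⟩ := Finset.exists_max_image I (Q p n) (hBne.mono Finset.subset_union_right)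
  have hall : ∀ M, Q p n M ≤ Q p n N := by
    intro M
    by_cases h : M ∈ I
    · exact hm M h
    · have : Q p n M = 0 := by
        unfold Q
        rw [Finset.filter_false_of_mem]
        · simp
        · intro v _ hv
          apply h
          rw [hI, Finset.mem_union]; left
          exact Finset.mem_image.mpr ⟨v, Finset.mem_univ _, hv⟩
      rw [this]; exact hQ0 N
  refine ⟨N, hall, ?_⟩
  have h1 : ∑ M ∈ B, Q p n M ≤ B.card * Q p n N := by
    rw [← nsmul_eq_mul]
    exact Finset.sum_le_card_nsmul _ _ _ fun M _ => hall M
  have h2 : 1 / ((supp p).card : ℝ) ≤ W * Q p n N :=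
    hs.trans (h1.trans (mul_le_mul_of_nonneg_right hB (hQ0 N)))
  rw [div_le_iff₀ hk'] at h2
  rw [div_le_iff₀ (by positivity)]
  linarith

/-- number of naturals in an interval -/
lemma interval_card (c r : ℝ) (hr : 0 ≤ r) (hc : 0 ≤ c) :
    ∃ J : Finset ℕ, (J.card : ℝ) ≤ 1 + 2 * r ∧ ∀ m : ℕ, ((m:ℝ) - c) ^ 2 ≤ r ^ 2 → m ∈ J := by
  refine ⟨Finset.Icc ⌈c - r⌉₊ ⌊c + r⌋₊, ?_, ?_⟩
  · rw [Nat.card_Icc]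
    by_cases h : ⌈c - r⌉₊ ≤ ⌊c + r⌋₊ + 1
    · rw [Nat.cast_sub h]
      have h1 := Nat.le_ceil (c - r)
      have h2 := Nat.floor_le (show 0 ≤ c + r by linarith)
      push_cast
      linarith
    · rw [Nat.sub_eq_zero_of_le (by omega)]
      simp; positivity
  · intro m hm
    have := abs_le_of_sq_le_sq hm hr
    rw [abs_le] at this
    rw [Finset.mem_Icc, Nat.ceil_le, Nat.le_floor_iff (by linarith)]
    constructor <;> linarith

lemma exists_box (p : V → ℝ) (hp : IsPMF p) (n : ℕ) (hn : 0 < n) (M : V) (hM : M ∈ supp p) :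
    ∃ B : Finset (V → ℕ),
      (B.card : ℝ) ≤ ∏ a ∈ (supp p).erase M, (1 + 2 * √((supp p).card * (n * p a))) ∧
      1 / ((supp p).card : ℝ) ≤ ∑ N ∈ B, Q p n N := by
  set s := supp p with hs
  set k : ℝ := (s.card : ℝ) with hk
  have hkpos : 0 < k := by
    rw [hk]; exact_mod_cast Finset.card_pos.mpr ⟨M, hM⟩
  -- good sequences
  set G : Finset (Fin n → V) := Finset.univ.filter fun v =>
    iid p n v ≠ 0 ∧ ∀ a ∈ s.erase M, ((cnt v a : ℝ) - n * p a) ^ 2 ≤ k * (n * p a) with hG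
  have hGp : 1 / k ≤ ∑ v ∈ G, iid p n v := by
    set Bad : V → Finset (Fin n → V) := fun a => Finset.univ.filter
      (fun v : Fin n → V => k * (n * p a) < ((cnt v a : ℝ) - n * p a) ^ 2) with hBad
    have h1 : ∑ a ∈ s.erase M, ∑ v ∈ Bad a, iid p n v ≤ (k - 1) * (1 / k) := by
      have : ((s.erase M).card : ℝ) = k - 1 := by
        rw [Finset.card_erase_of_mem hM, Nat.cast_sub (Finset.card_pos.mpr ⟨M, hM⟩)]; simp [hk]
      rw [← this, ← nsmul_eq_mul]
      apply Finset.sum_le_card_nsmul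
      intro a ha
      exact cheb p hp a ((mem_supp p a).mp (Finset.mem_of_mem_erase ha)) n hn k hkpos
    have h2 : (1:ℝ) ≤ ∑ v ∈ G, iid p n v + ∑ a ∈ s.erase M, ∑ v ∈ Bad a, iid p n v := by
      rw [← sum_iid p hp n]
      have e1 : ∑ v ∈ G, iid p n v = ∑ v, if v ∈ G then iid p n v else 0 := by
        rw [Finset.sum_ite_mem]; simp
      have e2 : ∀ a, ∑ v ∈ Bad a, iid p n v = ∑ v, if v ∈ Bad a then iid p n v else 0 := by
        intro a; rw [Finset.sum_ite_mem]; simp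
      simp_rw [e1, e2]
      rw [Finset.sum_comm, ← Finset.sum_add_distrib]
      apply Finset.sum_le_sum
      intro v _
      have hv := iid_nonneg p hp n v
      have hnn : ∀ a ∈ s.erase M, 0 ≤ if v ∈ Bad a then iid p n v else 0 := by
        intro a _; split_ifs <;> simp [hv]
      by_cases hvG : v ∈ G
      · have := Finset.sum_nonneg hnn
        rw [if_pos hvG]; linarith
      · rw [if_neg hvG]
        by_cases h0 : iid p n v = 0
        · rw [h0]; simp
        · have : ∃ a ∈ s.erase M, v ∈ Bad a := by
            by_contra hc
            push Not at hc
            apply hvG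
            simp only [hG, Finset.mem_filter, Finset.mem_univ, true_and]
            refine ⟨h0, fun a ha => ?_⟩
            have := hc a ha
            simp only [hBad, Finset.mem_filter, Finset.mem_univ, true_and, not_lt] at this
            exact this
          obtain ⟨a, ha, hav⟩ := this
          have := Finset.single_le_sum hnn ha
          rw [if_pos hav] at this
          linarith
    have h3 : (k - 1) * (1 / k) = 1 - 1 / k := by field_simp
    linarith
  refine ⟨G.image cnt, ?_, ?_⟩
  · choose J hJc hJm using fun a : V => interval_card (n * p a) (√(k * (n * p a)))
      (Real.sqrt_nonneg _) (mul_nonneg (Nat.cast_nonneg n) (hp.1 a))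
    have hinj : (G.image cnt).card ≤ (Finset.pi (s.erase M) J).card := by
      apply Finset.card_le_card_of_injOn (fun N a _ => N a)
      · intro N hN
        simp only [Finset.coe_image, Set.mem_image, Finset.mem_coe] at hN
        obtain ⟨v, hv, rfl⟩ := hN
        simp only [hG, Finset.mem_filter, Finset.mem_univ, true_and] at hv
        simp only [Finset.mem_coe, Finset.mem_pi]
        intro a ha
        apply hJm
        rw [Real.sq_sqrt (mul_nonneg hkpos.le (mul_nonneg (Nat.cast_nonneg n) (hp.1 a)))]
        exact hv.2 a ha
      · intro N hN N' hN' heq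
        simp only [Finset.coe_image, Set.mem_image, Finset.mem_coe] at hN hN'
        obtain ⟨v, hv, rfl⟩ := hN
        obtain ⟨w, hw, rfl⟩ := hN'
        simp only [hG, Finset.mem_filter, Finset.mem_univ, true_and] at hv hw
        have key : ∀ a, a ≠ M → cnt v a = cnt w a := by
          intro a haM
          by_cases ha : a ∈ s
          · exact congrFun (congrFun heq a) (Finset.mem_erase.mpr ⟨haM, ha⟩)
          · have := not_supp p hp a ha
            rw [cnt_zero_of p n v hv.1 a this, cnt_zero_of p n w hw.1 a this]
        funext a
        by_cases haM : a = M
        · subst haM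
          have e1 := sum_cnt v
          have e2 := sum_cnt w
          rw [← Finset.add_sum_erase _ _ (Finset.mem_univ a)] at e1 e2
          have : ∑ x ∈ Finset.univ.erase a, cnt v x = ∑ x ∈ Finset.univ.erase a, cnt w x :=
            Finset.sum_congr rfl fun x hx => key x (Finset.ne_of_mem_erase hx)
          omega
        · exact key a haM
    calc ((G.image cnt).card : ℝ) ≤ ((Finset.pi (s.erase M) J).card : ℝ) := by exact_mod_cast hinj
      _ = ∏ a ∈ s.erase M, ((J a).card : ℝ) := by rw [Finset.card_pi]; push_cast; rfl
      _ ≤ _ := Finset.prod_le_prod (fun a _ => Nat.cast_nonneg _) (fun a _ => hJc a)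
  · refine hGp.trans ?_
    rw [← Finset.sum_fiberwise_of_maps_to (fun v hv => Finset.mem_image_of_mem cnt hv)]
    apply Finset.sum_le_sum
    intro N _
    unfold Q
    apply Finset.sum_le_sum_of_subset_of_nonneg
    · intro v hv
      simp only [Finset.mem_filter, Finset.mem_univ, true_and] at hv ⊢
      exact hv.2
    · intro v _ _
      exact iid_nonneg p hp n v

lemma mem_typ (p : V → ℝ) (n : ℕ) (hn : 0 < n) (ε : ℝ) (v : Fin n → V) :
    v ∈ typ p n ε ↔ ∀ a, |(cnt v a : ℝ) - n * p a| ≤ ε * (n * p a) := by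
  have hn' : (0:ℝ) < n := by exact_mod_cast hn
  simp only [typ, Finset.mem_filter, Finset.mem_univ, true_and]
  apply forall_congr'
  intro a
  change |(cnt v a : ℝ) / n - p a| ≤ ε * p a ↔ _
  have : (cnt v a : ℝ) / n - p a = ((cnt v a : ℝ) - n * p a) / n := by field_simp
  rw [this, abs_div, abs_of_pos hn', div_le_iff₀ hn']
  rw [show ε * p a * n = ε * (n * p a) by ring]

lemma mode_mem (p : V → ℝ) (hp : IsPMF p) (n : ℕ) (hn : 0 < n) (ε : ℝ) (hε : 0 < ε)
    (N : V → ℕ) (hQ : 0 < Q p n N) (hmax : ∀ M, Q p n M ≤ Q p n N)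
    (h1 : ∀ a ∈ supp p, 1 ≤ ε * (n * p a)) (h2 : ((supp p).card : ℝ) ≤ ε * n)
    (v : Fin n → V) (hv : cnt v = N) : v ∈ typ p n ε := by
  have hsum : ∑ a, (N a : ℝ) = n := by
    rw [← hv]; exact_mod_cast sum_cnt v
  have hz : ∀ a, p a = 0 → N a = 0 := by
    intro a ha
    by_contra hc
    rw [Q_eq, Finset.prod_eq_zero (Finset.mem_univ a) (by rw [ha, zero_pow hc])] at hQ
    simp at hQ
  have hsum' : ∑ a ∈ supp p, (N a : ℝ) = n := by
    rw [← hsum]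
    apply Finset.sum_subset (Finset.subset_univ _)
    intro a _ h
    rw [hz a (not_supp p hp a h)]; simp
  rw [mem_typ p n hn]
  intro a
  rw [hv]
  by_cases ha : a ∈ supp p
  · have hpa := (mem_supp p a).mp ha
    have hst := fun b (hb : b ∈ supp p) => (mem_supp p b).mp hb
    have u1 : (N a : ℝ) ≤ (n + (supp p).card) * p a := by
      calc (N a : ℝ) = ∑ b ∈ supp p, (N a : ℝ) * p b := by
            rw [← Finset.mul_sum, sum_supp p hp, mul_one]
        _ ≤ ∑ b ∈ supp p, ((N b : ℝ) + 1) * p a :=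
            Finset.sum_le_sum fun b hb => mode_step p hp n N hQ hmax a b hpa (hst b hb)
        _ = _ := by
            rw [← Finset.sum_mul, Finset.sum_add_distrib, hsum']; simp
    have u2 : n * p a ≤ (N a : ℝ) + 1 := by
      calc n * p a = ∑ b ∈ supp p, (N b : ℝ) * p a := by
            rw [← Finset.sum_mul, hsum']
        _ ≤ ∑ b ∈ supp p, ((N a : ℝ) + 1) * p b :=
            Finset.sum_le_sum fun b hb => mode_step p hp n N hQ hmax b a (hst b hb) hpa
        _ = _ := by rw [← Finset.mul_sum, sum_supp p hp, mul_one]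
    have := h1 a ha
    rw [abs_le]
    constructor
    · linarith
    · nlinarith
  · have := not_supp p hp a ha
    rw [this, hz a this]; simp

/-- lower bound on the probability of the typical set -/
lemma typ_prob (p : V → ℝ) (hp : IsPMF p) (n : ℕ) (hn : 0 < n) (ε : ℝ) (hε : 0 < ε)
    (h1 : ∀ a ∈ supp p, 1 ≤ ε * (n * p a)) (h2 : ((supp p).card : ℝ) ≤ ε * n)
    (M : V) (hM : M ∈ supp p) :
    1 / ((supp p).card * ∏ a ∈ (supp p).erase M, (1 + 2 * √((supp p).card * (n * p a))))
      ≤ ∑ v ∈ typ p n ε, iid p n v := by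
  have hk : 0 < (supp p).card := Finset.card_pos.mpr ⟨M, hM⟩
  have hk' : (0:ℝ) < (supp p).card := by exact_mod_cast hk
  have hW : 0 < ∏ a ∈ (supp p).erase M, (1 + 2 * √((supp p).card * (n * p a))) :=
    Finset.prod_pos fun a _ => by positivity
  obtain ⟨N, hmax, hN⟩ := exists_mode p hp n _ hW (exists_box p hp n hn M hM) hk
  have hQ : 0 < Q p n N := lt_of_lt_of_le (by positivity) hN
  refine hN.trans ?_
  unfold Q
  apply Finset.sum_le_sum_of_subset_of_nonneg
  · intro v hv
    simp only [Finset.mem_filter, Finset.mem_univ, true_and] at hv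
    exact mode_mem p hp n hn ε hε N hQ hmax h1 h2 v hv
  · intro v _ _
    exact iid_nonneg p hp n v

lemma two_rpow_H (p : V → ℝ) (c : ℝ) :
    (2:ℝ) ^ (-(c * Hsh p)) = exp (c * ∑ a, p a * Real.log (p a)) := by
  rw [Real.rpow_def_of_pos (by norm_num)]
  congr 1
  unfold Hsh Real.logb
  have h2 : Real.log 2 ≠ 0 := by positivity
  have : ∑ a, p a * (Real.log (p a) / Real.log 2) = (∑ a, p a * Real.log (p a)) / Real.log 2 := by
    rw [Finset.sum_div]; apply Finset.sum_congr rfl; intro a _; ring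
  rw [this]
  field_simp

lemma Hsh_nonneg (p : V → ℝ) (hp : IsPMF p) : 0 ≤ Hsh p := by
  unfold Hsh
  rw [neg_nonneg]
  apply Finset.sum_nonpos
  intro a _
  have h1 : p a ≤ 1 := by
    rw [← hp.2]; exact Finset.single_le_sum (fun b _ => hp.1 b) (Finset.mem_univ a)
  exact mul_nonpos_of_nonneg_of_nonpos (hp.1 a)
    (Real.logb_nonpos (by norm_num) (hp.1 a) h1)

/-- pointwise bound for typical sequences with extra slack -/
lemma typ_iid (p : V → ℝ) (hp : IsPMF p) (n : ℕ) (hn : 0 < n) (ε : ℝ)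
    (M : V) (hM : M ∈ supp p) (hmax : ∀ a, p a ≤ p M) (hε : 0 < ε)
    (v : Fin n → V) (hv : v ∈ typ p n ε) :
    iid p n v ≤ (2:ℝ) ^ (-((n : ℝ) * (1 - ε) * Hsh p)) * exp (-(ε * n * (1 - p M))) := by
  rw [mem_typ p n hn] at hv
  have hpM := (mem_supp p M).mp hM
  have hz : ∀ a, p a = 0 → cnt v a = 0 := by
    intro a ha
    have := hv a
    rw [ha] at this
    simpa using this
  have hii : iid p n v = exp (∑ a, (cnt v a : ℝ) * Real.log (p a)) := by
    rw [iid_eq_prod_pow, Real.exp_sum]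
    apply Finset.prod_congr rfl
    intro a _
    rcases (hp.1 a).eq_or_lt with h | h
    · rw [hz a h.symm]; simp
    · rw [Real.exp_nat_mul, Real.exp_log h]
  rw [hii, two_rpow_H, ← Real.exp_add, Real.exp_le_exp]
  have hsum : ∑ a, (cnt v a : ℝ) = n := by exact_mod_cast sum_cnt v
  have hlog : Real.log (p M) ≤ -(1 - p M) := by
    have := Real.log_le_sub_one_of_pos hpM; linarith
  have h1 : ∑ a, ((cnt v a : ℝ) - (1 - ε) * (n * p a)) * Real.log (p a)
      ≤ ∑ a, ((cnt v a : ℝ) - (1 - ε) * (n * p a)) * Real.log (p M) := by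
    apply Finset.sum_le_sum
    intro a _
    rcases (hp.1 a).eq_or_lt with h | h
    · rw [hz a h.symm, ← h]; simp
    · apply mul_le_mul_of_nonneg_left (Real.log_le_log h (hmax a))
      have := (abs_le.mp (hv a)).1
      linarith
  have h2 : ∑ a, ((cnt v a : ℝ) - (1 - ε) * (n * p a)) = ε * n := by
    rw [Finset.sum_sub_distrib, hsum, ← Finset.mul_sum, ← Finset.mul_sum, hp.2]; ring
  rw [← Finset.sum_mul, h2] at h1
  have h3 : ∑ a, ((cnt v a : ℝ) - (1 - ε) * (n * p a)) * Real.log (p a)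
      = ∑ a, (cnt v a : ℝ) * Real.log (p a) - n * (1 - ε) * ∑ a, p a * Real.log (p a) := by
    rw [Finset.mul_sum, ← Finset.sum_sub_distrib]
    apply Finset.sum_congr rfl; intro a _; ring
  have h4 : ε * n * Real.log (p M) ≤ ε * n * (-(1 - p M)) :=
    mul_le_mul_of_nonneg_left hlog (by positivity)
  rw [h3] at h1
  linarith

/-- slack versus typical probability -/
lemma slack (p : V → ℝ) (hp : IsPMF p) (n : ℕ) (hn : 0 < n) (ε : ℝ) (hε : 0 < ε) (hε1 : ε ≤ 1)
    (μ : ℝ) (hμ : ∀ a ∈ supp p, μ ≤ p a) (hμ0 : 0 < μ)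
    (hk : 2 ≤ (supp p).card)
    (hδ : 2 * ((supp p).card : ℝ) * exp (-(n * ε ^ 2 * μ)) < 1)
    (M : V) (hM : M ∈ supp p) :
    0 < ∑ v ∈ typ p n ε, iid p n v ∧
    exp (-(ε * n * (1 - p M))) * (1 - 2 * ((supp p).card : ℝ) * exp (-(n * ε ^ 2 * μ)))
      ≤ ∑ v ∈ typ p n ε, iid p n v := by
  set s := supp p with hs
  set k := s.card with hkdef
  set x := (n:ℝ) * ε ^ 2 * μ with hx
  have hk2 : (2:ℝ) ≤ k := by exact_mod_cast hk
  have hn' : (0:ℝ) < n := by exact_mod_cast hn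
  have hx1 : 1 ≤ x := by
    by_contra hc
    push Not at hc
    have h1 : exp (-1) ≤ exp (-x) := by rw [Real.exp_le_exp]; linarith
    have h2 : exp (-1) * exp 1 = 1 := by rw [← Real.exp_add]; simp
    have h3 := Real.exp_one_lt_d9
    have h4 : 4 * exp (-x) < 1 := by
      have := exp_pos (-x)
      nlinarith
    have := exp_pos (-1)
    nlinarith
  have hya : ∀ a ∈ s, x ≤ n * ε ^ 2 * p a := fun a ha => by
    rw [hx]; have := hμ a ha; gcongr
  have h1 : ∀ a ∈ s, 1 ≤ ε * (n * p a) := by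
    intro a ha
    have h := hya a ha
    have hpa := (mem_supp p a).mp ha
    have : n * ε ^ 2 * p a ≤ ε * (n * p a) := by
      have e : n * ε ^ 2 * p a = ε * (ε * (n * p a)) := by ring
      rw [e]
      have : 0 < ε * (n * p a) := by positivity
      nlinarith
    linarith
  have h2 : (k : ℝ) ≤ ε * n := by
    calc (k:ℝ) = ∑ a ∈ s, (1:ℝ) := by simp [hkdef]
      _ ≤ ∑ a ∈ s, ε * (n * p a) := Finset.sum_le_sum h1
      _ = ε * n := by rw [← Finset.mul_sum, ← Finset.mul_sum, sum_supp p hp]; ring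
  have hP := typ_prob p hp n hn ε hε h1 h2 M hM
  have hW : 0 < ∏ a ∈ s.erase M, (1 + 2 * √(k * (n * p a))) :=
    Finset.prod_pos fun a _ => by positivity
  set W := ∏ a ∈ s.erase M, (1 + 2 * √(k * (n * p a))) with hWdef
  have hkW : 0 < (k:ℝ) * W := by positivity
  refine ⟨lt_of_lt_of_le (by positivity) hP, le_trans ?_ hP⟩
  rw [le_div_iff₀ hkW]
  have hE : exp (-(ε * n * (1 - p M))) = ∏ a ∈ s.erase M, exp (-(ε * (n * p a))) := by
    rw [← Real.exp_sum]
    congr 1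
    have := Finset.add_sum_erase s p hM
    rw [sum_supp p hp] at this
    rw [Finset.sum_neg_distrib, ← Finset.mul_sum, ← Finset.mul_sum, ← this]; ring
  have hprod : W * exp (-(ε * n * (1 - p M))) ≤ ((1 + 2 * √(k * x)) * exp (-x)) ^ (k - 1) := by
    rw [hE, hWdef, ← Finset.prod_mul_distrib, hkdef, ← Finset.card_erase_of_mem hM,
      ← Finset.prod_const]
    apply Finset.prod_le_prod
    · intro a _; positivity
    · intro a ha
      have := term_bound s.card (by positivity) x (n * ε ^ 2 * p a) ε hx1
        (hya a (Finset.mem_of_mem_erase ha)) hε hε1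
      have e1 : n * ε ^ 2 * p a / ε ^ 2 = n * p a := by field_simp
      have e2 : n * ε ^ 2 * p a / ε = ε * (n * p a) := by field_simp
      rw [e1, e2] at this
      exact this
  have hA := amgm k hk x hx1 hδ
  have hδ' : 0 ≤ 1 - 2 * (k:ℝ) * exp (-x) := by linarith
  calc _ = k * (W * exp (-(ε * n * (1 - p M)))) * (1 - 2 * (k:ℝ) * exp (-x)) := by ring
    _ ≤ k * (((1 + 2 * √(k * x)) * exp (-x)) ^ (k - 1)) * (1 - 2 * (k:ℝ) * exp (-x)) := by
        gcongr
    _ ≤ 1 := hA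

/-- closed form of the output distribution -/
lemma out_eq (p : V → ℝ) (n : ℕ) (ε : ℝ)
    (e : Fin (typ p n ε).card ≃ (typ p n ε)) (m : Fin (typ p n ε).card) :
    (∑ v : Fin n → V, ∑ u : Fin (typ p n ε).card,
          iid p n v * (1 / ((typ p n ε).card : ℝ)) *
            (if (if h : v ∈ typ p n ε then e.symm ⟨v, h⟩ else u) = m then 1 else 0))
      = iid p n (e m) + (∑ v ∈ (typ p n ε)ᶜ, iid p n v) / (typ p n ε).card := by
  have hc : ((typ p n ε).card : ℝ) ≠ 0 := by
    have := m.pos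
    positivity
  rw [← Finset.sum_add_sum_compl (typ p n ε)]
  congr 1
  · rw [Finset.sum_eq_single_of_mem (e m : Fin n → V) (e m).2]
    · simp
      field_simp
    · intro v hv hne
      apply Finset.sum_eq_zero
      intro u _
      rw [dif_pos hv, if_neg, mul_zero]
      intro h
      apply hne
      rw [← h]; simp
  · rw [Finset.sum_div]
    apply Finset.sum_congr rfl
    intro v hv
    rw [Finset.mem_compl] at hv
    simp only [dif_neg hv]
    simp
    rfl

lemma main_point (p : V → ℝ) (hp : IsPMF p) (n : ℕ) (hn : 0 < n) (ε : ℝ) (hε : 0 < ε) (δ : ℝ)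
    (hδ0 : 0 ≤ δ) (hδ1 : δ < 1) (M : V) (hM : M ∈ supp p) (hmax : ∀ a, p a ≤ p M)
    (hP : 0 < ∑ v ∈ typ p n ε, iid p n v)
    (hS : exp (-(ε * n * (1 - p M))) * (1 - δ) ≤ ∑ v ∈ typ p n ε, iid p n v)
    (v : Fin n → V) (hv : v ∈ typ p n ε) :
    iid p n v + (∑ v ∈ (typ p n ε)ᶜ, iid p n v) / (typ p n ε).card
      ≤ (2:ℝ) ^ (-((n : ℝ) * (1 - ε) * Hsh p)) / (1 - δ) := by
  set T := typ p n ε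
  set B := (2:ℝ) ^ (-((n : ℝ) * (1 - ε) * Hsh p))
  have hB : 0 < B := by positivity
  set S := exp (-(ε * n * (1 - p M)))
  have hS0 : 0 < S := exp_pos _
  set P := ∑ v ∈ T, iid p n v with hPd
  have hc : 0 < (T.card : ℝ) := by exact_mod_cast Finset.card_pos.mpr ⟨v, hv⟩
  have htot : P + ∑ v ∈ Tᶜ, iid p n v = 1 := by
    rw [hPd, Finset.sum_add_sum_compl, sum_iid p hp n]
  have hP1 : P ≤ T.card * (B * S) := by
    rw [hPd, ← nsmul_eq_mul]
    exact Finset.sum_le_card_nsmul _ _ _ fun w hw => typ_iid p hp n hn ε M hM hmax hε w hw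
  have hQ0 : 0 ≤ ∑ v ∈ Tᶜ, iid p n v := Finset.sum_nonneg fun w _ => iid_nonneg p hp n w
  set R := ∑ v ∈ Tᶜ, iid p n v
  have h1 : iid p n v ≤ B * S := typ_iid p hp n hn ε M hM hmax hε v hv
  have h2 : R / T.card ≤ R * (B * S) / P := by
    rw [div_le_div_iff₀ hc hP]; nlinarith
  calc iid p n v + R / T.card ≤ B * S + R * (B * S) / P := add_le_add h1 h2
    _ = B * S / P := by rw [show R = 1 - P by linarith]; field_simp; ring
    _ ≤ B / (1 - δ) := by
        rw [div_le_div_iff₀ hP (by linarith)]; nlinarith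

/-- trivial pointwise bound -/
lemma out_le_one (p : V → ℝ) (hp : IsPMF p) (n : ℕ) (ε : ℝ) (v : Fin n → V) (hv : v ∈ typ p n ε) :
    iid p n v + (∑ v ∈ (typ p n ε)ᶜ, iid p n v) / (typ p n ε).card ≤ 1 := by
  have h1 : iid p n v ≤ ∑ v ∈ typ p n ε, iid p n v :=
    Finset.single_le_sum (fun w _ => iid_nonneg p hp n w) hv
  have h2 := Finset.sum_add_sum_compl (typ p n ε) (iid p n)
  rw [sum_iid p hp n] at h2
  have hc : 1 ≤ ((typ p n ε).card : ℝ) := by exact_mod_cast Finset.card_pos.mpr ⟨v, hv⟩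
  have h3 : 0 ≤ ∑ v ∈ (typ p n ε)ᶜ, iid p n v := Finset.sum_nonneg fun w _ => iid_nonneg p hp n w
  have h4 := div_le_self h3 hc
  linarith

end S18

/-- typical-sequence-based encoder has nearly uniform output:
pointwise bound on the output pmf and min-entropy lower bound. -/
theorem statement18 {V : Type*} [Fintype V] (pV : V → ℝ) (hV : IsPMF pV)
    (n : ℕ) (ε₀ : ℝ) (hε₀ : 0 < ε₀)
    (μ δ : ℝ)
    (hμ : μ = sInf {r : ℝ | ∃ v, 0 < pV v ∧ r = pV v})
    (hδ : δ = 2 * (Fintype.card V : ℝ) * Real.exp (-((n : ℝ) * ε₀ ^ 2 * μ)))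
    (hδ1 : δ < 1)
    -- enumeration of the typical set
    (e : Fin (typ pV n ε₀).card ≃ (typ pV n ε₀)) :
    -- pointwise bound: `p_{f_n(V^n)}(m) ≤ 2^{-n(1-ε₀)H(V)}/(1-δ)`
    (∀ m : Fin (typ pV n ε₀).card,
      (∑ v : Fin n → V, ∑ u : Fin (typ pV n ε₀).card,
          iid pV n v * (1 / ((typ pV n ε₀).card : ℝ)) *
            (if (if h : v ∈ typ pV n ε₀ then e.symm ⟨v, h⟩ else u) = m then 1 else 0))
        ≤ (2:ℝ) ^ (-((n : ℝ) * (1 - ε₀) * Hsh pV)) / (1 - δ)) ∧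
    -- min-entropy bound: `H_∞(f_n(V^n)) ≥ n(1-ε₀)H(V) + log(1-δ)`
    (n : ℝ) * (1 - ε₀) * Hsh pV + Real.logb 2 (1 - δ)
      ≤ Hinf (fun m : Fin (typ pV n ε₀).card =>
          ∑ v : Fin n → V, ∑ u : Fin (typ pV n ε₀).card,
            iid pV n v * (1 / ((typ pV n ε₀).card : ℝ)) *
              (if (if h : v ∈ typ pV n ε₀ then e.symm ⟨v, h⟩ else u) = m then 1 else 0)) := by
  classical
  have hμs : ∀ a ∈ S18.supp pV, μ ≤ pV a := by
    intro a ha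
    rw [hμ]
    exact csInf_le ⟨0, by rintro r ⟨v, hv, rfl⟩; exact hv.le⟩ ⟨a, (S18.mem_supp pV a).mp ha, rfl⟩
  have hne : (S18.supp pV).Nonempty := by
    by_contra h
    rw [Finset.not_nonempty_iff_eq_empty] at h
    have := S18.sum_supp pV hV
    rw [h] at this
    simp at this
  have hμ0 : 0 < μ := by
    obtain ⟨b, hb, hmin⟩ := Finset.exists_min_image (S18.supp pV) pV hne
    have h1 : pV b ≤ μ := by
      rw [hμ]
      apply le_csInf
      · obtain ⟨a, ha⟩ := hne
        exact ⟨_, a, (S18.mem_supp pV a).mp ha, rfl⟩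
      · rintro r ⟨v, hv, rfl⟩
        exact hmin v ((S18.mem_supp pV v).mpr hv)
    exact lt_of_lt_of_le ((S18.mem_supp pV b).mp hb) h1
  have hcard : ((S18.supp pV).card : ℝ) ≤ Fintype.card V := by
    exact_mod_cast Finset.card_le_univ _
  have hk1 : (1:ℝ) ≤ (S18.supp pV).card := by exact_mod_cast Finset.card_pos.mpr hne
  have hδ0 : 0 ≤ δ := by rw [hδ]; positivity
  have hn : 0 < n := by
    rcases Nat.eq_zero_or_pos n with h | h
    · exfalso
      subst h
      simp at hδ
      linarith
    · exact h
  have hH := S18.Hsh_nonneg pV hV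
  obtain ⟨M, hM, hmax'⟩ := Finset.exists_max_image (S18.supp pV) pV hne
  have hmax : ∀ a, pV a ≤ pV M := by
    intro a
    by_cases ha : a ∈ S18.supp pV
    · exact hmax' a ha
    · rw [S18.not_supp pV hV a ha]; exact hV.1 M
  -- dichotomy
  have key : (n : ℝ) * (1 - ε₀) * Hsh pV ≤ 0 ∨
      (0 < ∑ v ∈ typ pV n ε₀, iid pV n v ∧
        exp (-(ε₀ * n * (1 - pV M))) * (1 - δ) ≤ ∑ v ∈ typ pV n ε₀, iid pV n v) := by
    rcases le_or_gt 1 ε₀ with h1 | h1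
    · left
      apply mul_nonpos_of_nonpos_of_nonneg _ hH
      apply mul_nonpos_of_nonneg_of_nonpos (Nat.cast_nonneg n)
      linarith
    by_cases hk : 2 ≤ (S18.supp pV).card
    · right
      have hle : 2 * ((S18.supp pV).card : ℝ) * exp (-(n * ε₀ ^ 2 * μ)) ≤ δ := by
        rw [hδ]; gcongr
      obtain ⟨hP, hS⟩ := S18.slack pV hV n hn ε₀ hε₀ h1.le μ hμs hμ0 hk (lt_of_le_of_lt hle hδ1) M hM
      refine ⟨hP, le_trans ?_ hS⟩
      gcongr
    · left
      have hc1 : (S18.supp pV).card = 1 := by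
        have := Finset.card_pos.mpr hne
        omega
      obtain ⟨b, hb⟩ := Finset.card_eq_one.mp hc1
      have hs := S18.sum_supp pV hV
      rw [hb, Finset.sum_singleton] at hs
      have : Hsh pV = 0 := by
        unfold Hsh
        rw [neg_eq_zero]
        apply Finset.sum_eq_zero
        intro a _
        by_cases ha : a ∈ S18.supp pV
        · rw [hb, Finset.mem_singleton] at ha
          subst ha
          rw [hs]; simp
        · rw [S18.not_supp pV hV a ha]; simp
      rw [this]; simp
  have hpt : ∀ m : Fin (typ pV n ε₀).card,
      iid pV n (e m) + (∑ v ∈ (typ pV n ε₀)ᶜ, iid pV n v) / (typ pV n ε₀).card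
        ≤ (2:ℝ) ^ (-((n : ℝ) * (1 - ε₀) * Hsh pV)) / (1 - δ) := by
    intro m
    rcases key with h | ⟨hP, hS⟩
    · refine (S18.out_le_one pV hV n ε₀ _ (e m).2).trans ?_
      rw [le_div_iff₀ (by linarith)]
      have : (1:ℝ) ≤ (2:ℝ) ^ (-((n : ℝ) * (1 - ε₀) * Hsh pV)) :=
        Real.one_le_rpow (by norm_num) (by linarith)
      linarith
    · exact S18.main_point pV hV n hn ε₀ hε₀ δ hδ0 hδ1 M hM hmax hP hS _ (e m).2
  simp_rw [S18.out_eq]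
  refine ⟨hpt, ?_⟩
  unfold Hinf
  have h1δ : 0 < 1 - δ := by linarith
  rcases (typ pV n ε₀).eq_empty_or_nonempty with hT | hT
  · have hemp : IsEmpty (Fin (typ pV n ε₀).card) := by
      rw [hT]; simp; infer_instance
    rw [Real.iSup_of_isEmpty, Real.logb_zero, neg_zero]
    have hlog : Real.logb 2 (1 - δ) ≤ 0 := Real.logb_nonpos (by norm_num) h1δ.le (by linarith)
    rcases key with h | ⟨hP, _⟩
    · linarith
    · rw [hT] at hP; simp at hP
  · have hcpos : 0 < (typ pV n ε₀).card := Finset.card_pos.mpr hT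
    haveI : Nonempty (Fin (typ pV n ε₀).card) := ⟨⟨0, hcpos⟩⟩
    have hsup := ciSup_le hpt
    have hpos : 0 < ⨆ m, (iid pV n (e m) +
        (∑ v ∈ (typ pV n ε₀)ᶜ, iid pV n v) / (typ pV n ε₀).card) := by
      have hbdd := Set.finite_range (fun m => iid pV n (e m) +
        (∑ v ∈ (typ pV n ε₀)ᶜ, iid pV n v) / (typ pV n ε₀).card)
      by_contra hc
      have hz : ∀ m, iid pV n (e m) +
        (∑ v ∈ (typ pV n ε₀)ᶜ, iid pV n v) / (typ pV n ε₀).card ≤ 0 := fun m =>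
        (le_ciSup hbdd.bddAbove m).trans (not_lt.mp hc)
      have hR : 0 ≤ ∑ v ∈ (typ pV n ε₀)ᶜ, iid pV n v :=
        Finset.sum_nonneg fun w _ => S18.iid_nonneg pV hV n w
      have hcR : (0:ℝ) < (typ pV n ε₀).card := by exact_mod_cast hcpos
      have hR' := div_nonneg hR hcR.le
      have hall : ∑ v ∈ typ pV n ε₀, iid pV n v = 0 := by
        apply Finset.sum_eq_zero
        intro v hv
        have := hz (e.symm ⟨v, hv⟩)
        simp only [Equiv.apply_symm_apply] at this
        linarith [S18.iid_nonneg pV hV n v]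
      have htot := Finset.sum_add_sum_compl (typ pV n ε₀) (iid pV n)
      rw [S18.sum_iid pV hV n, hall, zero_add] at htot
      have := hz ⟨0, hcpos⟩
      rw [htot] at this
      have h5 : 0 < 1 / ((typ pV n ε₀).card : ℝ) := by positivity
      linarith [S18.iid_nonneg pV hV n (e ⟨0, hcpos⟩)]
    have hl := Real.logb_le_logb_of_le (b := 2) (by norm_num) hpos hsup
    rw [Real.logb_div (by positivity) h1δ.ne', Real.logb_rpow (by norm_num) (by norm_num)] at hl
    linarith
end
end
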